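/- arXiv:1503.00345 — 12 statements merged into one kernel-verified Lean document; each statement's English description precedes it below -/
import Mathlib

section
/- Let X be a nonnegative random variable with E[X] < ∞ and log X integrable, and let a ≥ 0 be a real number such that X ≥ a almost surely. Then E[X] − exp(E[log X]) ≤ max(2·Var(√X), E[(√X − √a)²]). -/
open MeasureTheory ProbabilityTheory Real

lemma aux_mono1 : AntitoneOn (fun u : ℝ => 1 / u - u + 2 * Real.log u) (Set.Ioi 0) := by
  have hd : ∀ x : ℝ, 0 < x → HasDerivAt (fun u : ℝ => 1 / u - u + 2 * Real.log u)
      (-(x ^ 2)⁻¹ - 1 + 2 * x⁻¹) x := by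
    intro x hx
    simp only [one_div]
    have h := ((hasDerivAt_inv hx.ne').sub (hasDerivAt_id x)).add
      ((Real.hasDerivAt_log hx.ne').const_mul 2)
    exact h.congr_deriv (by simp)
  apply antitoneOn_of_deriv_nonpos (convex_Ioi 0)
  · intro x hx
    exact (hd x hx).continuousAt.continuousWithinAt
  · intro x hx
    rw [interior_Ioi] at hx
    exact (hd x hx).differentiableAt.differentiableWithinAt
  · intro x hx
    rw [interior_Ioi] at hx
    have hx' : 0 < x := hx
    rw [(hd x hx).deriv]
    have : -(x ^ 2)⁻¹ - 1 + 2 * x⁻¹ = -(x⁻¹ - 1) ^ 2 := by field_simp; ring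
    rw [this]
    nlinarith [sq_nonneg (x⁻¹ - 1)]

lemma aux_mono2 : MonotoneOn (fun u : ℝ => Real.log u - (u - 1) + (u - 1) ^ 2 / 2)
    (Set.Ioi 0) := by
  have hd : ∀ x : ℝ, 0 < x → HasDerivAt
      (fun u : ℝ => Real.log u - (u - 1) + (u - 1) ^ 2 / 2) (x⁻¹ - 1 + (x - 1)) x := by
    intro x hx
    have h1 : HasDerivAt (fun u : ℝ => u - 1) 1 x := (hasDerivAt_id x).sub_const 1
    have h := ((Real.hasDerivAt_log hx.ne').sub h1).add ((h1.pow 2).div_const 2)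
    exact h.congr_deriv (by simp)
  apply monotoneOn_of_deriv_nonneg (convex_Ioi 0)
  · intro x hx
    exact (hd x hx).continuousAt.continuousWithinAt
  · intro x hx
    rw [interior_Ioi] at hx
    exact (hd x hx).differentiableAt.differentiableWithinAt
  · intro x hx
    rw [interior_Ioi] at hx
    have hx' : 0 < x := hx
    rw [(hd x hx).deriv]
    have : x⁻¹ - 1 + (x - 1) = (x - 1) ^ 2 / x := by field_simp; ring
    rw [this]
    positivity

lemma aux_phi : AntitoneOn (fun u : ℝ => (u - 1 - Real.log u) / (u - 1) ^ 2) (Set.Ioo 0 1) := by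
  have hd : ∀ x : ℝ, x ∈ Set.Ioo (0 : ℝ) 1 → HasDerivAt
      (fun u : ℝ => (u - 1 - Real.log u) / (u - 1) ^ 2)
      (((1 - x⁻¹) * (x - 1) ^ 2 - (x - 1 - Real.log x) * (2 * (x - 1))) / ((x - 1) ^ 2) ^ 2) x := by
    intro x hx
    have h1 : HasDerivAt (fun u : ℝ => u - 1) 1 x := (hasDerivAt_id x).sub_const 1
    have hne : (x - 1) ^ 2 ≠ 0 := pow_ne_zero 2 (by linarith [hx.2] : x - 1 < 0).ne
    have h := (h1.sub (Real.hasDerivAt_log hx.1.ne')).div (h1.pow 2) hne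
    exact h.congr_deriv (by simp)
  apply antitoneOn_of_deriv_nonpos (convex_Ioo 0 1)
  · intro x hx
    exact (hd x hx).continuousAt.continuousWithinAt
  · intro x hx
    rw [interior_Ioo] at hx
    exact (hd x hx).differentiableAt.differentiableWithinAt
  · intro x hx
    rw [interior_Ioo] at hx
    have hx0 : 0 < x := hx.1
    rw [(hd x hx).deriv]
    apply div_nonpos_of_nonpos_of_nonneg _ (by positivity)
    have h1 : (1 - x⁻¹) * (x - 1) ^ 2 - (x - 1 - Real.log x) * (2 * (x - 1))
        = (x - 1) * (1 / x - x + 2 * Real.log x) := by field_simp; ring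
    rw [h1]
    have h2 := aux_mono1 (Set.mem_Ioi.2 hx0) (Set.mem_Ioi.2 one_pos) hx.2.le
    simp only [Real.log_one] at h2
    apply mul_nonpos_of_nonpos_of_nonneg
    · linarith [hx.2]
    · linarith

lemma aux_quad (r u : ℝ) (hr : 0 < r) (hr1 : r < 1) (hu : r ≤ u) :
    u - 1 - (r - 1 - Real.log r) / (r - 1) ^ 2 * (u - 1) ^ 2 ≤ Real.log u := by
  have hu0 : 0 < u := lt_of_lt_of_le hr hu
  rcases lt_or_ge u 1 with h | h
  · have h1 := aux_phi ⟨hr, hr1⟩ ⟨hu0, h⟩ hu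
    simp only at h1
    have hp : 0 < (u - 1) ^ 2 := by nlinarith
    rw [div_le_iff₀ hp] at h1
    linarith
  · have h1 := aux_mono2 (Set.mem_Ioi.2 one_pos) (Set.mem_Ioi.2 hu0) h
    have h2 := aux_mono2 (Set.mem_Ioi.2 hr) (Set.mem_Ioi.2 one_pos) hr1.le
    simp only [Real.log_one] at h1 h2
    have hp : 0 < (r - 1) ^ 2 := by nlinarith
    have h3 : 1 / 2 ≤ (r - 1 - Real.log r) / (r - 1) ^ 2 := by
      rw [le_div_iff₀ hp]; linarith
    nlinarith [mul_le_mul_of_nonneg_right h3 (sq_nonneg (u - 1))]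

/-- Upper bound with `essInf X` replaced by any a.s. lower bound `a ≥ 0`:
`E X - exp (E log X) ≤ max (2 Var √X) (E (√X - √a)²)`. -/
theorem arith_geom_upper_bound_of_le {Ω : Type*} [MeasurableSpace Ω] {μ : Measure Ω}
    [IsProbabilityMeasure μ] (X : Ω → ℝ) (hXm : Measurable X)
    (hXnn : ∀ᵐ ω ∂μ, 0 ≤ X ω) (hXint : Integrable X μ)
    (hlog : Integrable (fun ω => Real.log (X ω)) μ)
    (a : ℝ) (ha : 0 ≤ a) (haX : ∀ᵐ ω ∂μ, a ≤ X ω) :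
    (∫ ω, X ω ∂μ) - Real.exp (∫ ω, Real.log (X ω) ∂μ) ≤
      max (2 * variance (fun ω => Real.sqrt (X ω)) μ)
        (∫ ω, (Real.sqrt (X ω) - Real.sqrt a) ^ 2 ∂μ) := by
  have hYm : Measurable (fun ω => √(X ω)) := hXm.sqrt
  have hsq : (fun ω => √(X ω) ^ 2) =ᵐ[μ] X := by
    filter_upwards [hXnn] with ω h using Real.sq_sqrt h
  have hY2 : MemLp (fun ω => √(X ω)) 2 μ :=
    (memLp_two_iff_integrable_sq hYm.aestronglyMeasurable).2 (hXint.congr hsq.symm)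
  have hYi : Integrable (fun ω => √(X ω)) μ := hY2.integrable (by norm_num)
  have hYsq : Integrable (fun ω => √(X ω) ^ 2) μ := hY2.integrable_sq
  have hvar := variance_eq_sub hY2
  have hv0 := variance_nonneg (fun ω => √(X ω)) μ
  have hEX : ∫ ω, √(X ω) ^ 2 ∂μ = ∫ ω, X ω ∂μ := integral_congr_ae hsq
  have hquad : ∀ c : ℝ, ∫ ω, (√(X ω) - c) ^ 2 ∂μ
      = ∫ ω, X ω ∂μ - 2 * c * ∫ ω, √(X ω) ∂μ + c ^ 2 := by
    intro c
    have h1 : (fun ω => (√(X ω) - c) ^ 2) = fun ω => (√(X ω) ^ 2 - 2 * c * √(X ω)) + c ^ 2 := by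
      funext ω; ring
    have hj : Integrable (fun ω => √(X ω) ^ 2 - 2 * c * √(X ω)) μ := hYsq.sub (hYi.const_mul _)
    rw [h1, integral_add hj (integrable_const _),
      integral_sub hYsq (hYi.const_mul _), integral_const_mul, hEX]
    simp
  have hqi : ∀ c : ℝ, Integrable (fun ω => (√(X ω) - c) ^ 2) μ := by
    intro c
    exact (hY2.sub (memLp_const c)).integrable_sq
  have hvar' : variance (fun ω => √(X ω)) μ = ∫ ω, X ω ∂μ - (∫ ω, √(X ω) ∂μ) ^ 2 := by
    rw [hvar, ← hEX]; rfl
  have haY : ∀ᵐ ω ∂μ, √a ≤ √(X ω) := by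
    filter_upwards [haX] with ω h using Real.sqrt_le_sqrt h
  have hms : √a ≤ ∫ ω, √(X ω) ∂μ := by
    have := integral_mono_ae (integrable_const (√a)) hYi haY
    simpa using this
  rw [hquad]
  have hsa : √a ^ 2 = a := Real.sq_sqrt ha
  rcases ha.eq_or_lt with h0 | hapos
  · subst h0
    apply le_max_of_le_right
    simp
    positivity
  have hspos : 0 < √a := Real.sqrt_pos.2 hapos
  set m := ∫ ω, √(X ω) ∂μ with hm
  set v := variance (fun ω => √(X ω)) μ with hv
  set s := √a with hs
  have hE : ∫ ω, X ω ∂μ = m ^ 2 + v := by linarith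
  rw [hE]
  set M := max v ((m - s) ^ 2) with hM
  have hMv : v ≤ M := le_max_left _ _
  have hMd : (m - s) ^ 2 ≤ M := le_max_right _ _
  have hmax : max (2 * v) (m ^ 2 + v - 2 * s * m + s ^ 2) = v + M := by
    rw [hM, ← max_add_add_left]; congr 1 <;> ring
  rw [hmax]
  set L := ∫ ω, Real.log (X ω) ∂μ with hL
  have hM0 : 0 ≤ M := hv0.trans hMv
  suffices h : m ^ 2 - M ≤ Real.exp L by linarith
  set e := √M with he
  have heM : e ^ 2 = M := Real.sq_sqrt hM0
  have he0 : 0 ≤ e := Real.sqrt_nonneg _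
  have hed : m - s ≤ e := Real.le_sqrt_of_sq_le hMd
  have hm0 : 0 < m := lt_of_lt_of_le hspos hms
  rcases le_or_gt m e with hme | hme
  · have : m ^ 2 ≤ e ^ 2 := by gcongr
    have := Real.exp_pos L
    linarith
  have hfac : m ^ 2 - M = (m - e) * (m + e) := by rw [← heM]; ring
  have hp1 : 0 < m - e := by linarith
  have hp2 : 0 < m + e := by linarith
  have hlogeq : ∀ᵐ ω ∂μ, Real.log (X ω) = 2 * Real.log (√(X ω)) := by
    filter_upwards [hXnn] with ω h
    rw [Real.log_sqrt h]; ring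
  rw [hfac, ← Real.log_le_iff_le_exp (by positivity), Real.log_mul hp1.ne' hp2.ne']
  rcases he0.eq_or_lt with he00 | hepos
  · rw [← he00] at hed ⊢
    have hc : ∀ᵐ ω ∂μ, 2 * Real.log m ≤ Real.log (X ω) := by
      filter_upwards [hlogeq, haY] with ω h1 h2
      rw [h1]
      have := Real.log_le_log hm0 (by linarith : m ≤ √(X ω))
      linarith
    have := integral_mono_ae (integrable_const (2 * Real.log m)) hlog hc
    simp at this
    simp only [sub_zero, add_zero]
    linarith
  set t := m + e with ht
  set r := (m - e) / t with hr
  set K := (r - 1 - Real.log r) / (r - 1) ^ 2 with hK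
  have hr0 : 0 < r := by positivity
  have hr1 : r < 1 := by rw [hr, div_lt_one hp2]; linarith
  have hK0 : 0 ≤ K := by
    apply div_nonneg _ (sq_nonneg _)
    linarith [Real.log_le_sub_one_of_pos hr0]
  have hb : ∀ᵐ ω ∂μ, 2 * Real.log t + 2 / t * (√(X ω) - t) - 2 * K / t ^ 2 * (√(X ω) - t) ^ 2
      ≤ Real.log (X ω) := by
    filter_upwards [hlogeq, haY] with ω h1 h2
    have h3 : m - e ≤ √(X ω) := by linarith
    have h4 := aux_quad r (√(X ω) / t) hr0 hr1 (by rw [hr]; gcongr)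
    rw [← hK, Real.log_div (by linarith) hp2.ne'] at h4
    rw [h1]
    have h5 : √(X ω) / t - 1 = (√(X ω) - t) / t := by field_simp
    rw [h5, div_pow] at h4
    have h6 : 2 / t * (√(X ω) - t) = 2 * ((√(X ω) - t) / t) := by ring
    have h7 : 2 * K / t ^ 2 * (√(X ω) - t) ^ 2 = 2 * (K * ((√(X ω) - t) ^ 2 / t ^ 2)) := by ring
    rw [h6, h7]
    linarith
  have hi1 : Integrable (fun ω => 2 * Real.log t + 2 / t * (√(X ω) - t)) μ :=
    (integrable_const _).add ((hYi.sub (integrable_const t)).const_mul _)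
  have hi2 : Integrable (fun ω => 2 * K / t ^ 2 * (√(X ω) - t) ^ 2) μ := (hqi t).const_mul _
  have hint := integral_mono_ae (hi1.sub hi2) hlog hb
  have hcomp : ∫ ω, (2 * Real.log t + 2 / t * (√(X ω) - t)
      - 2 * K / t ^ 2 * (√(X ω) - t) ^ 2) ∂μ
      = 2 * Real.log t + 2 / t * (m - t) - 2 * K / t ^ 2 * (v + e ^ 2) := by
    have hj : Integrable (fun ω => 2 / t * (√(X ω) - t)) μ :=
      (hYi.sub (integrable_const t)).const_mul _
    rw [integral_sub hi1 hi2, integral_add (integrable_const _) hj, integral_const_mul (2 / t), integral_const_mul (2 * K / t ^ 2),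
      integral_sub hYi (integrable_const t), hquad t, hE]
    simp only [integral_const, probReal_univ, one_smul, smul_eq_mul, one_mul]
    rw [← hm, ht]; ring
  have hint' : 2 * Real.log t + 2 / t * (m - t) - 2 * K / t ^ 2 * (v + e ^ 2) ≤ L := by
    rw [← hcomp]; exact hint
  have hle : 2 * K / t ^ 2 * (v + e ^ 2) ≤ 2 * K / t ^ 2 * (2 * e ^ 2) := by
    apply mul_le_mul_of_nonneg_left _ (by positivity)
    linarith
  have hr1' : r - 1 = -(2 * e / t) := by rw [hr, ht]; field_simp; ring_nf
  have hKe : 2 * K / t ^ 2 * (2 * e ^ 2) = r - 1 - Real.log r := by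
    have h1 : K * (r - 1) ^ 2 = r - 1 - Real.log r := by
      rw [hK]; exact div_mul_cancel₀ _ (pow_ne_zero 2 (by linarith : r - 1 < 0).ne)
    rw [← h1, hr1']; ring
  have hlr : Real.log r = Real.log (m - e) - Real.log t := Real.log_div hp1.ne' hp2.ne'
  have h8 : 2 / t * (m - t) = -(2 * e / t) := by
    have : m - t = -e := by rw [ht]; ring
    rw [this]; ring
  rw [hKe, hr1', hlr] at hle
  rw [h8] at hint'
  linarith
end

section
/- Let X be a nonnegative random variable with E[X] < ∞. Set V_X := Var(√X), m_X := essInf X, and E_X := E[(√X − √m_X)²]. Then either E_X = V_X = 0, or E_X > V_X > 0. (This is the necessity part of Proposition 1 for the pair (V_X, E_X).) -/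
open MeasureTheory ProbabilityTheory Real

/-- Necessity part of Proposition 1 for `(V_X, E_X)`: with `V_X = Var √X` and
`E_X = E (√X - √m_X)²`, `m_X = essInf X`, either `E_X = V_X = 0` or `E_X > V_X > 0`. -/
theorem admissible_V_E {Ω : Type*} [MeasurableSpace Ω] {μ : Measure Ω}
    [IsProbabilityMeasure μ] (X : Ω → ℝ) (hXm : Measurable X)
    (hXnn : ∀ᵐ ω ∂μ, 0 ≤ X ω) (hXint : Integrable X μ)
    (V E : ℝ) (hVdef : V = variance (fun ω => Real.sqrt (X ω)) μ)
    (hEdef : E = ∫ ω, (Real.sqrt (X ω) - Real.sqrt (essInf X μ)) ^ 2 ∂μ) :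
    (E = 0 ∧ V = 0) ∨ (E > V ∧ V > 0) := by
  have hm : ∀ᵐ ω ∂μ, essInf X μ ≤ X ω :=
    ae_essInf_le (Filter.isBoundedUnder_of_eventually_ge hXnn)
  have hSm : Measurable (fun ω => Real.sqrt (X ω)) := hXm.sqrt
  have hS2 : MemLp (fun ω => Real.sqrt (X ω)) 2 μ := by
    rw [memLp_two_iff_integrable_sq hSm.aestronglyMeasurable]
    refine hXint.congr ?_
    filter_upwards [hXnn] with ω h
    exact (Real.sq_sqrt h).symm
  set s := Real.sqrt (essInf X μ) with hs
  have hY2 : MemLp (fun ω => Real.sqrt (X ω) - s) 2 μ := hS2.sub (memLp_const s)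
  have hYnn : 0 ≤ᵐ[μ] fun ω => Real.sqrt (X ω) - s := by
    filter_upwards [hm] with ω h
    exact sub_nonneg.2 (Real.sqrt_le_sqrt h)
  have hYint : Integrable (fun ω => Real.sqrt (X ω) - s) μ := hY2.integrable (by norm_num)
  have hV : V = E - (∫ ω, (Real.sqrt (X ω) - s) ∂μ) ^ 2 := by
    rw [hVdef, hEdef, ← variance_sub_const hSm.aestronglyMeasurable s, variance_eq_sub hY2]
    rfl
  have hV0 : 0 ≤ V := hVdef ▸ variance_nonneg _ _
  by_cases h0 : ∫ ω, (Real.sqrt (X ω) - s) ∂μ = 0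
  · left
    have hz := (integral_eq_zero_iff_of_nonneg_ae hYnn hYint).1 h0
    have hE : E = 0 := by
      rw [hEdef]
      refine integral_eq_zero_of_ae ?_
      filter_upwards [hz] with ω h
      simp only [Pi.zero_apply] at h ⊢
      rw [h]; norm_num
    refine ⟨hE, ?_⟩
    rw [hV, hE, h0]; norm_num
  · right
    refine ⟨by have := sq_pos_of_ne_zero h0; linarith, lt_of_le_of_ne hV0 ?_⟩
    intro hVz
    apply h0
    have hc := ae_eq_integral_of_variance_eq_zero hS2 (hVdef ▸ hVz.symm)
    have hc0 : 0 ≤ ∫ ω, Real.sqrt (X ω) ∂μ := integral_nonneg fun ω => Real.sqrt_nonneg _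
    set c := ∫ ω, Real.sqrt (X ω) ∂μ with hcdef
    have hX : X =ᵐ[μ] fun _ => c ^ 2 := by
      filter_upwards [hc, hXnn] with ω h h'
      rw [← Real.sq_sqrt h', h]
    have hsc : s = c := by
      rw [hs, essInf_congr_ae hX, essInf_const', Real.sqrt_sq hc0]
    refine integral_eq_zero_of_ae ?_
    filter_upwards [hc] with ω h
    simp only [Pi.zero_apply]
    rw [h, hsc, sub_self]
end

section
/- For any real numbers V and E with E > V > 0, there exists a nonnegative random variable X (which may be taken to assume at most two values) with E[X] < ∞ such that Var(√X) = V and E[(√X − √m_X)²] = E, where m_X := essInf X. In fact one may take X = Y², where Y takes value u with probability p and value v with probability 1 − p, with p = V/E, u = 0, and v − u = E/√(E − V). -/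
open MeasureTheory ProbabilityTheory Real

/-- Sufficiency part of Proposition 1 for `(V, E)` with `E > V > 0`: there is a
nonnegative random variable `X` taking at most two values (namely `X = Y²` with
`Y = Y_{u,v,p}`, `u = 0`, `v = E/√(E-V)`, `p = V/E`) such that `Var √X = V` and
`E (√X - √(essInf X))² = E`. -/
theorem exists_rv_with_V_E (V E : ℝ) (hV : 0 < V) (hVE : V < E) :
    ∃ (Ω : Type) (_ : MeasurableSpace Ω) (μ : Measure Ω) (_ : IsProbabilityMeasure μ)
      (X : Ω → ℝ), Measurable X ∧ (∀ ω, 0 ≤ X ω) ∧ Integrable X μ ∧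
      (∀ ω, X ω = 0 ∨ X ω = (E / Real.sqrt (E - V)) ^ 2) ∧
      μ {ω | X ω = 0} = ENNReal.ofReal (V / E) ∧
      variance (fun ω => Real.sqrt (X ω)) μ = V ∧
      (∫ ω, (Real.sqrt (X ω) - Real.sqrt (essInf X μ)) ^ 2 ∂μ) = E := by
  have hE : 0 < E := hV.trans hVE
  have hd : 0 < E - V := sub_pos.2 hVE
  have hs : 0 < Real.sqrt (E - V) := Real.sqrt_pos.2 hd
  have hs2 : Real.sqrt (E - V) ^ 2 = E - V := Real.sq_sqrt hd.le
  set v : ℝ := E / Real.sqrt (E - V) with hv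
  have hv0 : 0 < v := div_pos hE hs
  have hv2 : v ^ 2 * (E - V) = E ^ 2 := by
    rw [hv, div_pow, hs2]; field_simp
  have hp0 : 0 < V / E := div_pos hV hE
  have hp1 : V / E < 1 := (div_lt_one hE).2 hVE
  have hq : 0 ≤ 1 - V / E := by linarith
  let μ : Measure Bool := ENNReal.ofReal (V / E) • Measure.dirac false
    + ENNReal.ofReal (1 - V / E) • Measure.dirac true
  have hμ : IsProbabilityMeasure μ := by
    constructor
    simp only [μ, Measure.add_apply, Measure.smul_apply, measure_univ, smul_eq_mul, mul_one]
    rw [← ENNReal.ofReal_add hp0.le hq]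
    simp
  have hint : ∀ f : Bool → ℝ, ∫ ω, f ω ∂μ = V / E * f false + (1 - V / E) * f true := by
    intro f
    rw [integral_add_measure, integral_smul_measure, integral_smul_measure,
      integral_dirac, integral_dirac, ENNReal.toReal_ofReal hp0.le, ENNReal.toReal_ofReal hq]
    · simp
    · exact Integrable.smul_measure Integrable.of_finite ENNReal.ofReal_ne_top
    · exact Integrable.smul_measure Integrable.of_finite ENNReal.ofReal_ne_top
  let X : Bool → ℝ := fun ω => if ω then v ^ 2 else 0
  have hXf : X false = 0 := by simp [X]
  have hXt : X true = v ^ 2 := by simp [X]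
  have hXm : Measurable X := measurable_of_finite X
  have hX0 : ∀ ω, 0 ≤ X ω := by
    intro ω; cases ω
    · rw [hXf]
    · rw [hXt]; positivity
  have hess : essInf X μ = 0 := by
    have hset : {a : ℝ | ∀ᵐ ω ∂μ, a ≤ X ω} = Set.Iic 0 := by
      ext a
      constructor
      · intro h
        by_contra hc
        have h1 : μ {ω | ¬ a ≤ X ω} = 0 := h
        have h2 : μ {false} = 0 := by
          refine measure_mono_null ?_ h1
          intro ω hω
          rw [Set.mem_singleton_iff] at hω
          subst hω
          simpa [hXf] using hc
        simp [μ] at h2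
        linarith
      · intro h
        show ∀ᵐ ω ∂μ, a ≤ X ω
        exact Filter.Eventually.of_forall fun ω => le_trans h (hX0 ω)
    rw [essInf, Filter.liminf_eq, hset, csSup_Iic]
  refine ⟨Bool, inferInstance, μ, hμ, X, hXm, hX0, Integrable.of_finite, ?_, ?_, ?_, ?_⟩
  · intro ω; cases ω
    · exact Or.inl hXf
    · exact Or.inr hXt
  · have : {ω | X ω = 0} = {false} := by
      ext ω; cases ω
      · simp [hXf]
      · simp [hXt, hv0.ne']
    rw [this]
    simp [μ]
  · rw [variance_eq_integral (measurable_of_finite _).aemeasurable, hint, hint, hXf, hXt,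
      Real.sqrt_zero, Real.sqrt_sq hv0.le]
    have : V / E * (1 - V / E) * v ^ 2 = V := by
      field_simp
      linear_combination hv2
    linear_combination this
  · rw [hint, hess, hXf, hXt, Real.sqrt_zero, Real.sqrt_sq hv0.le]
    have : (1 - V / E) * v ^ 2 = E := by
      field_simp
      linear_combination hv2
    linear_combination this
end

section
/- Let X be a nonnegative random variable with E[X] < ∞ and M_X := essSup X < ∞. Set V_X := Var(√X) and F_X := E[(√M_X − √X)²]. Then either F_X = V_X = 0, or F_X > V_X > 0. (This is the necessity part of Proposition 1 for the pair (V_X, F_X).) -/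
open MeasureTheory ProbabilityTheory Real

/-- Necessity part of Proposition 1 for `(V_X, F_X)`: with `V_X = Var √X` and
`F_X = E (√M_X - √X)²`, `M_X = essSup X < ∞`, either `F_X = V_X = 0` or `F_X > V_X > 0`. -/
theorem admissible_V_F {Ω : Type*} [MeasurableSpace Ω] {μ : Measure Ω}
    [IsProbabilityMeasure μ] (X : Ω → ℝ) (hXm : Measurable X)
    (hXnn : ∀ᵐ ω ∂μ, 0 ≤ X ω) (hXint : Integrable X μ)
    (hbdd : ∃ C : ℝ, ∀ᵐ ω ∂μ, X ω ≤ C)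
    (V F : ℝ) (hVdef : V = variance (fun ω => Real.sqrt (X ω)) μ)
    (hFdef : F = ∫ ω, (Real.sqrt (essSup X μ) - Real.sqrt (X ω)) ^ 2 ∂μ) :
    (F = 0 ∧ V = 0) ∨ (F > V ∧ V > 0) := by
  have hYm : Measurable (fun ω => Real.sqrt (X ω)) := hXm.sqrt
  have hL : MemLp (fun ω => Real.sqrt (X ω)) 2 μ := by
    rw [memLp_two_iff_integrable_sq hYm.aestronglyMeasurable]
    refine hXint.congr ?_
    filter_upwards [hXnn] with ω h
    exact (Real.sq_sqrt h).symm
  have hYi : Integrable (fun ω => Real.sqrt (X ω)) μ := hL.integrable (by norm_num)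
  obtain ⟨C, hC⟩ := hbdd
  have hle : ∀ᵐ ω ∂μ, X ω ≤ essSup X μ :=
    ae_le_essSup ⟨C, hC⟩
  set s := Real.sqrt (essSup X μ) with hs
  have hYs : ∀ᵐ ω ∂μ, Real.sqrt (X ω) ≤ s := by
    filter_upwards [hle] with ω h
    exact Real.sqrt_le_sqrt h
  set m := ∫ ω, Real.sqrt (X ω) ∂μ with hm
  have hint : ∫ ω, (s - Real.sqrt (X ω)) ∂μ = s - m := by
    rw [integral_sub (integrable_const _) hYi]; simp [hm]
  have hF : F = V + (s - m) ^ 2 := by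
    have h1 := variance_eq_sub (μ := μ) (X := fun ω => s - Real.sqrt (X ω))
      ((memLp_const s).sub hL)
    rw [variance_const_sub hYm.aestronglyMeasurable, ← hVdef, hint] at h1
    simp only [Pi.pow_apply] at h1
    rw [← hFdef] at h1
    linarith
  have hVnn : 0 ≤ V := hVdef ▸ variance_nonneg _ _
  rcases hVnn.eq_or_lt with h0 | hpos
  · left
    have hae : ∀ᵐ ω ∂μ, Real.sqrt (X ω) = m := by
      have h2 : ∫ ω, (Real.sqrt (X ω) - m) ^ 2 ∂μ = 0 := by
        rw [← variance_eq_integral hYm.aemeasurable, ← hVdef, h0]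
      have hi2 : Integrable (fun ω => (Real.sqrt (X ω) - m) ^ 2) μ :=
        (hL.sub (memLp_const m)).integrable_sq
      rw [integral_eq_zero_iff_of_nonneg (fun ω => sq_nonneg _) hi2] at h2
      filter_upwards [h2] with ω h
      have : (Real.sqrt (X ω) - m) ^ 2 = 0 := h
      have := pow_eq_zero_iff (two_ne_zero) |>.1 this
      linarith
    have hX : X =ᵐ[μ] fun _ => m ^ 2 := by
      filter_upwards [hae, hXnn] with ω h h'
      rw [← h, Real.sq_sqrt h']
    have hmn : 0 ≤ m := integral_nonneg fun ω => Real.sqrt_nonneg _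
    have hsm : s = m := by
      rw [hs, essSup_congr_ae hX, essSup_const _ (IsProbabilityMeasure.ne_zero μ),
        Real.sqrt_sq hmn]
    exact ⟨by rw [hF, ← h0, hsm]; ring, h0.symm⟩
  · right
    refine ⟨?_, hpos⟩
    have hne : s - m ≠ 0 := by
      intro h
      have hi2 : Integrable (fun ω => s - Real.sqrt (X ω)) μ := (integrable_const s).sub hYi
      rw [h, integral_eq_zero_iff_of_nonneg_ae
        (by filter_upwards [hYs] with ω h; simpa using h) hi2] at hint
      have hF0 : F = 0 := by
        rw [hFdef]
        refine integral_eq_zero_of_ae ?_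
        filter_upwards [hint] with ω h
        have h : s - Real.sqrt (X ω) = 0 := h
        simp [h]
      rw [hF, h] at hF0
      simp at hF0
      exact hpos.ne' hF0
    have := sq_pos_of_ne_zero hne
    linarith
end

section
/- For any real numbers V and F with F > V > 0, there exists a nonnegative bounded random variable X (which may be taken to assume at most two values) such that Var(√X) = V and E[(√M_X − √X)²] = F, where M_X := essSup X. In fact one may take X = Y², where Y takes value u with probability p and value v with probability q = 1 − p, with q = V/F, u ≥ 0 arbitrary, and v − u = F/√(F − V). -/
open MeasureTheory ProbabilityTheory Real

/-- Sufficiency part of Proposition 1 for `(V, F)` with `F > V > 0`: for any `u ≥ 0`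
there is a nonnegative bounded random variable `X` taking at most two values (namely
`X = Y²` with `Y = Y_{u,v,p}`, `v = u + F/√(F-V)`, `q = 1 - p = V/F`) such that
`Var √X = V` and `E (√(essSup X) - √X)² = F`. -/
theorem exists_rv_with_V_F (V F : ℝ) (hV : 0 < V) (hVF : V < F) (u : ℝ) (hu : 0 ≤ u) :
    ∃ (Ω : Type) (_ : MeasurableSpace Ω) (μ : Measure Ω) (_ : IsProbabilityMeasure μ)
      (X : Ω → ℝ), Measurable X ∧ (∀ ω, 0 ≤ X ω) ∧
      (∀ ω, X ω = u ^ 2 ∨ X ω = (u + F / Real.sqrt (F - V)) ^ 2) ∧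
      μ {ω | X ω = (u + F / Real.sqrt (F - V)) ^ 2} = ENNReal.ofReal (V / F) ∧
      variance (fun ω => Real.sqrt (X ω)) μ = V ∧
      (∫ ω, (Real.sqrt (essSup X μ) - Real.sqrt (X ω)) ^ 2 ∂μ) = F := by
  have hF : 0 < F := hV.trans hVF
  have hFV : 0 < F - V := sub_pos.2 hVF
  set d : ℝ := F / Real.sqrt (F - V) with hd
  have hd0 : 0 < d := div_pos hF (Real.sqrt_pos.2 hFV)
  have hd2 : d ^ 2 = F ^ 2 / (F - V) := by
    rw [hd, div_pow, Real.sq_sqrt hFV.le]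
  have hq : 0 < V / F := div_pos hV hF
  have hp : 0 < (F - V) / F := div_pos hFV hF
  have hpq : (F - V) / F + V / F = 1 := by field_simp; ring
  have hlt : u ^ 2 < (u + d) ^ 2 := by nlinarith
  let μ : Measure Bool := ENNReal.ofReal ((F - V) / F) • Measure.dirac false +
    ENNReal.ofReal (V / F) • Measure.dirac true
  have hμ : IsProbabilityMeasure μ := by
    constructor
    simp only [μ, Measure.add_apply, Measure.smul_apply, measure_univ, smul_eq_mul, mul_one]
    rw [← ENNReal.ofReal_add hp.le hq.le, hpq, ENNReal.ofReal_one]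
  let X : Bool → ℝ := fun b => bif b then (u + d) ^ 2 else u ^ 2
  have hint : ∀ f : Bool → ℝ, ∫ b, f b ∂μ = (F - V) / F * f false + V / F * f true := by
    intro f
    have h1 : ∀ ν : Measure Bool, IsFiniteMeasure ν → Integrable f ν :=
      fun ν _ => Integrable.of_finite
    have i1 := (h1 (Measure.dirac false) inferInstance).smul_measure
      (ENNReal.ofReal_ne_top (r := (F - V) / F))
    have i2 := (h1 (Measure.dirac true) inferInstance).smul_measure
      (ENNReal.ofReal_ne_top (r := V / F))
    simp only [μ]
    rw [integral_add_measure i1 i2, integral_smul_measure, integral_smul_measure,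
      integral_dirac, integral_dirac, ENNReal.toReal_ofReal hp.le, ENNReal.toReal_ofReal hq.le,
      smul_eq_mul, smul_eq_mul]
  have hsf : Real.sqrt (X false) = u := by simp [X, Real.sqrt_sq hu]
  have hst : Real.sqrt (X true) = u + d := by simp [X, Real.sqrt_sq (add_nonneg hu hd0.le)]
  have hess : essSup X μ = (u + d) ^ 2 := by
    have hset : {a | ∀ᵐ b ∂μ, X b ≤ a} = Set.Ici ((u + d) ^ 2) := by
      ext a
      simp only [Set.mem_setOf_eq, Set.mem_Ici]
      constructor
      · intro h
        by_contra hlt'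
        have h0 : μ {b | ¬ X b ≤ a} = 0 := ae_iff.1 h
        have h1 : μ {true} ≤ μ {b | ¬ X b ≤ a} := by
          apply measure_mono
          intro b hb
          rw [Set.mem_singleton_iff] at hb
          subst hb
          simpa [X] using hlt'
        have h2 : μ {true} = ENNReal.ofReal (V / F) := by simp [μ]
        rw [h0, h2, nonpos_iff_eq_zero, ENNReal.ofReal_eq_zero] at h1
        linarith
      · intro h
        refine Filter.Eventually.of_forall fun b => ?_
        cases b
        · exact hlt.le.trans h
        · exact h
    rw [essSup, Filter.limsup_eq, hset, csInf_Ici]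
  refine ⟨Bool, inferInstance, μ, hμ, X, measurable_of_finite X, ?_, ?_, ?_, ?_, ?_⟩
  · intro b
    cases b <;> simp only [X, cond_true, cond_false] <;> positivity
  · intro b
    cases b <;> simp [X]
  · have hs : {b | X b = (u + d) ^ 2} = {true} := by
      ext b
      cases b
      · simp [X, hlt.ne]
      · simp [X]
    rw [hs]
    simp [μ]
  · rw [variance_eq_integral (measurable_of_finite _).aemeasurable, hint, hint]
    simp only [hsf, hst]
    have e1 : u - ((F - V) / F * u + V / F * (u + d)) = - (V / F * d) := by
      field_simp; ring
    have e2 : u + d - ((F - V) / F * u + V / F * (u + d)) = (F - V) / F * d := by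
      field_simp; ring
    rw [e1, e2, neg_sq, mul_pow, mul_pow, hd2]
    field_simp
    ring
  · rw [hint, hess]
    have hst' : Real.sqrt ((u + d) ^ 2) = u + d := hst
    rw [hsf, hst, hst', sub_self, add_sub_cancel_left, hd2]
    field_simp
    ring
end

section
/- Let X be a nonnegative random variable with E[X] < ∞, M_X := essSup X < ∞, and V_X := Var(√X) > 0. Set F_X := E[(√M_X − √X)²], m_X := essInf X, and E_X := E[(√X − √m_X)²]. Then E_X ≥ F_X·V_X/(F_X − V_X). -/
open MeasureTheory ProbabilityTheory Real

/-- Proposition 2 (lower bound for `E_X`): if `M_X = essSup X < ∞` and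
`V_X = Var √X > 0`, then `E_X ≥ F_X V_X / (F_X - V_X)`, where
`E_X = E (√X - √(essInf X))²` and `F_X = E (√(essSup X) - √X)²`. -/
theorem E_ge_FV_div_F_sub_V {Ω : Type*} [MeasurableSpace Ω] {μ : Measure Ω}
    [IsProbabilityMeasure μ] (X : Ω → ℝ) (hXm : Measurable X)
    (hXnn : ∀ᵐ ω ∂μ, 0 ≤ X ω) (hXint : Integrable X μ)
    (hbdd : ∃ C : ℝ, ∀ᵐ ω ∂μ, X ω ≤ C)
    (V E F : ℝ) (hVdef : V = variance (fun ω => Real.sqrt (X ω)) μ)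
    (hEdef : E = ∫ ω, (Real.sqrt (X ω) - Real.sqrt (essInf X μ)) ^ 2 ∂μ)
    (hFdef : F = ∫ ω, (Real.sqrt (essSup X μ) - Real.sqrt (X ω)) ^ 2 ∂μ)
    (hV : 0 < V) :
    E ≥ F * V / (F - V) := by
  obtain ⟨C, hC⟩ := hbdd
  have hup : ∀ᵐ ω ∂μ, X ω ≤ essSup X μ :=
    ae_le_essSup (Filter.isBoundedUnder_of_eventually_le hC)
  have hlo : ∀ᵐ ω ∂μ, essInf X μ ≤ X ω :=
    ae_essInf_le (Filter.isBoundedUnder_of_eventually_ge hXnn)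
  generalize essSup X μ = M at *
  generalize essInf X μ = m at *
  have hYm : Measurable (fun ω => Real.sqrt (X ω)) := hXm.sqrt
  have hY : ∀ᵐ ω ∂μ, Real.sqrt (X ω) ∈ Set.Icc (Real.sqrt m) (Real.sqrt M) := by
    filter_upwards [hup, hlo] with ω h1 h2
    exact ⟨Real.sqrt_le_sqrt h2, Real.sqrt_le_sqrt h1⟩
  have hBD := variance_le_sub_mul_sub hY hYm.aemeasurable
  have hL : MemLp (fun ω => Real.sqrt (X ω)) 2 μ :=
    memLp_of_bounded hY hYm.aestronglyMeasurable 2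
  have hI : Integrable (fun ω => Real.sqrt (X ω)) μ := hL.integrable (by norm_num)
  have key : ∀ c : ℝ, ∫ ω, (Real.sqrt (X ω) - c) ^ 2 ∂μ
      = variance (fun ω => Real.sqrt (X ω)) μ + (∫ ω, Real.sqrt (X ω) ∂μ - c) ^ 2 := by
    intro c
    have h1 := variance_eq_sub (hL.sub (memLp_const c))
    have h2 := variance_sub_const hYm.aestronglyMeasurable (μ := μ) c
    have h3 : ∫ ω, (Real.sqrt (X ω) - c) ∂μ = ∫ ω, Real.sqrt (X ω) ∂μ - c := by
      rw [integral_sub hI (integrable_const c)]; simp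
    have h4 : variance (fun ω => Real.sqrt (X ω) - c) μ
      = ∫ ω, (Real.sqrt (X ω) - c) ^ 2 ∂μ - (∫ ω, (Real.sqrt (X ω) - c) ∂μ) ^ 2 := h1
    rw [h3, h2] at h4
    linarith
  have hF : F = V + (Real.sqrt M - ∫ ω, Real.sqrt (X ω) ∂μ) ^ 2 := by
    rw [hFdef, hVdef]
    simp_rw [sub_sq_comm (Real.sqrt M)]
    exact key _
  rw [key, ← hVdef] at hEdef
  rw [← hVdef] at hBD
  generalize (∫ ω, Real.sqrt (X ω) ∂μ) = e at *
  have hne : Real.sqrt M - e ≠ 0 := by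
    intro h
    rw [h] at hBD
    linarith
  have hq : 0 < (Real.sqrt M - e) ^ 2 := by positivity
  have hFV : F - V = (Real.sqrt M - e) ^ 2 := by linarith
  rw [hFV, ge_iff_le, div_le_iff₀ hq, hF, hEdef]
  have := mul_self_le_mul_self hV.le hBD
  nlinarith
end

section
/- Let X be a nonnegative random variable with E[X] < ∞, M_X := essSup X < ∞, and V_X := Var(√X) > 0, and set m_X := essInf X, E_X := E[(√X − √m_X)²], F_X := E[(√M_X − √X)²]. Then E_X = F_X·V_X/(F_X − V_X) holds if and only if the support of the distribution of X is exactly {m_X, M_X}, i.e., if and only if the support of the distribution of X contains at most two points. -/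
open MeasureTheory ProbabilityTheory Real

/-- The topological support of a (distribution) measure on `ℝ`: the set of points all
of whose neighborhoods have positive measure. -/
def distSupport (ν : MeasureTheory.Measure ℝ) : Set ℝ :=
  {x | ∀ U ∈ nhds x, ν U ≠ 0}

/-- Proposition 2, equality case: with `M_X = essSup X < ∞` and `V_X = Var √X > 0`,
`E_X = F_X V_X / (F_X - V_X)` holds if and only if the support of the distribution of
`X` is exactly `{essInf X, essSup X}` (i.e. has at most two points). -/
theorem E_eq_FV_div_F_sub_V_iff {Ω : Type*} [MeasurableSpace Ω] {μ : Measure Ω}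
    [IsProbabilityMeasure μ] (X : Ω → ℝ) (hXm : Measurable X)
    (hXnn : ∀ᵐ ω ∂μ, 0 ≤ X ω) (hXint : Integrable X μ)
    (hbdd : ∃ C : ℝ, ∀ᵐ ω ∂μ, X ω ≤ C)
    (V E F : ℝ) (hVdef : V = variance (fun ω => Real.sqrt (X ω)) μ)
    (hEdef : E = ∫ ω, (Real.sqrt (X ω) - Real.sqrt (essInf X μ)) ^ 2 ∂μ)
    (hFdef : F = ∫ ω, (Real.sqrt (essSup X μ) - Real.sqrt (X ω)) ^ 2 ∂μ)
    (hV : 0 < V) :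
    E = F * V / (F - V) ↔ distSupport (μ.map X) = {essInf X μ, essSup X μ} := by
  obtain ⟨C, hC⟩ := hbdd
  have hb1 : Filter.IsBoundedUnder (· ≤ ·) (ae μ) X := ⟨C, by simpa using hC⟩
  have hb2 : Filter.IsBoundedUnder (· ≥ ·) (ae μ) X := ⟨0, by simpa using hXnn⟩
  have hM : ∀ᵐ ω ∂μ, X ω ≤ essSup X μ := ae_le_essSup hb1
  have hm : ∀ᵐ ω ∂μ, essInf X μ ≤ X ω := ae_essInf_le hb2
  have hm0 : 0 ≤ essInf X μ :=
    Filter.le_liminf_of_le hb1.isCoboundedUnder_ge hXnn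
  have hM0 : 0 ≤ essSup X μ := by
    obtain ⟨ω, h1, h2⟩ := (hXnn.and hM).exists
    exact h1.trans h2
  generalize essInf X μ = m at *
  generalize essSup X μ = M at *
  have hYm : Measurable (fun ω => √(X ω)) := hXm.sqrt
  have hL2 : MemLp (fun ω => √(X ω)) 2 μ := by
    rw [memLp_two_iff_integrable_sq hYm.aestronglyMeasurable]
    refine hXint.congr ?_
    filter_upwards [hXnn] with ω h
    rw [Real.sq_sqrt h]
  have hY1 : Integrable (fun ω => √(X ω)) μ := hL2.integrable (by norm_num)
  have hY2 : Integrable (fun ω => √(X ω) ^ 2) μ := hL2.integrable_sq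
  have hV2 : V = (∫ ω, √(X ω) ^ 2 ∂μ) - (∫ ω, √(X ω) ∂μ) ^ 2 := by
    rw [hVdef, variance_eq_sub hL2]; rfl
  have hquad : ∀ c d e : ℝ, ∫ ω, (c * √(X ω) ^ 2 + d * √(X ω) + e) ∂μ
      = c * (∫ ω, √(X ω) ^ 2 ∂μ) + d * (∫ ω, √(X ω) ∂μ) + e := by
    intro c d e
    have h12 : Integrable (fun ω => c * √(X ω) ^ 2 + d * √(X ω)) μ :=
      (hY2.const_mul c).add (hY1.const_mul d)
    rw [integral_add h12 (integrable_const e),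
      integral_add (hY2.const_mul c) (hY1.const_mul d), integral_const_mul, integral_const_mul]
    simp
  have hquadi : ∀ c d e : ℝ, Integrable (fun ω => c * √(X ω) ^ 2 + d * √(X ω) + e) μ :=
    fun c d e => ((hY2.const_mul c).add (hY1.const_mul d)).add (integrable_const e)
  have hE2 := hquad 1 (-2 * √m) (√m ^ 2)
  have hF2 := hquad 1 (-2 * √M) (√M ^ 2)
  have hG2 := hquad (-1) (√m + √M) (-(√m * √M))
  have hGi := hquadi (-1) (√m + √M) (-(√m * √M))
  have eE : (fun ω => 1 * √(X ω) ^ 2 + -2 * √m * √(X ω) + √m ^ 2)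
    = fun ω => (√(X ω) - √m) ^ 2 := by ext; ring
  have eF : (fun ω => 1 * √(X ω) ^ 2 + -2 * √M * √(X ω) + √M ^ 2)
    = fun ω => (√M - √(X ω)) ^ 2 := by ext; ring
  have eG : (fun ω => -1 * √(X ω) ^ 2 + (√m + √M) * √(X ω) + -(√m * √M))
    = fun ω => (√(X ω) - √m) * (√M - √(X ω)) := by ext; ring
  rw [eE, ← hEdef] at hE2
  rw [eF, ← hFdef] at hF2
  rw [eG] at hG2 hGi
  have hGnn : 0 ≤ᵐ[μ] fun ω => (√(X ω) - √m) * (√M - √(X ω)) := by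
    filter_upwards [hm, hM] with ω h1 h2
    exact mul_nonneg (sub_nonneg.2 (Real.sqrt_le_sqrt h1)) (sub_nonneg.2 (Real.sqrt_le_sqrt h2))
  have hGge := integral_nonneg_of_ae hGnn
  have hp1 : 0 ≤ (∫ ω, √(X ω) ∂μ) - √m := by
    have := integral_mono_ae (integrable_const (√m)) hY1
      (hm.mono fun ω h => Real.sqrt_le_sqrt h)
    simp at this
    linarith
  have hp2 : 0 ≤ √M - ∫ ω, √(X ω) ∂μ := by
    have := integral_mono_ae hY1 (integrable_const (√M))
      (hM.mono fun ω h => Real.sqrt_le_sqrt h)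
    simp at this
    linarith
  have hne : ∀ c, ¬ ∀ᵐ ω ∂μ, X ω = c := by
    intro c hc
    have : variance (fun ω => √(X ω)) μ = variance (fun _ => √c) μ :=
      variance_congr (hc.mono fun ω h => by simp [h])
    rw [← hVdef] at this
    simp [variance_eq_integral aemeasurable_const] at this
    linarith
  have key1 : E = F * V / (F - V) ↔ ∫ ω, (√(X ω) - √m) * (√M - √(X ω)) ∂μ = 0 := by
    generalize ∫ ω, (√(X ω) - √m) * (√M - √(X ω)) ∂μ = G at *
    generalize ∫ ω, √(X ω) ∂μ = p at *
    generalize ∫ ω, √(X ω) ^ 2 ∂μ = q at *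
    have hE3 : E = V + (p - √m) ^ 2 := by rw [hE2, hV2]; ring
    have hF3 : F = V + (√M - p) ^ 2 := by rw [hF2, hV2]; ring
    have hG3 : G = (p - √m) * (√M - p) - V := by rw [hG2, hV2]; ring
    generalize p - √m = α at *
    generalize √M - p = β at *
    have hβ : β ≠ 0 := by
      rintro rfl
      linarith
    have hFV : F - V ≠ 0 := by
      rw [hF3]; simpa using hβ
    rw [eq_div_iff hFV, hE3, hF3, hG3]
    constructor
    · intro h
      have h' : (α * β - V) * (α * β + V) = 0 := by linear_combination h
      rcases mul_eq_zero.1 h' with h | h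
      · exact h
      · nlinarith [mul_nonneg hp1 hp2]
    · intro h
      linear_combination (α * β + V) * h
  have key2 : (∫ ω, (√(X ω) - √m) * (√M - √(X ω)) ∂μ = 0) ↔ ∀ᵐ ω ∂μ, X ω = m ∨ X ω = M := by
    rw [integral_eq_zero_iff_of_nonneg_ae hGnn hGi]
    constructor
    · intro h
      filter_upwards [h, hXnn] with ω h h0
      rcases mul_eq_zero.1 h with h | h
      · exact Or.inl ((Real.sqrt_inj h0 hm0).1 (by linarith))
      · exact Or.inr ((Real.sqrt_inj h0 hM0).1 (by linarith))
    · intro h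
      filter_upwards [h] with ω h
      rcases h with h | h <;> simp [h]
  have hS : distSupport (μ.map X) = (μ.map X).support := by
    ext x
    simp [distSupport, Measure.mem_support_iff_forall, pos_iff_ne_zero]
  have hSae : ∀ᵐ ω ∂μ, X ω ∈ (μ.map X).support :=
    ae_of_ae_map hXm.aemeasurable Measure.support_mem_ae
  rw [key1, key2, hS]
  constructor
  · intro h
    have hsub : (μ.map X).support ⊆ {m, M} := by
      apply Measure.support_subset_of_isClosed (Set.toFinite _).isClosed
      exact (ae_map_iff hXm.aemeasurable (Set.toFinite ({m, M} : Set ℝ)).measurableSet).2 h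
    refine hsub.antisymm ?_
    rintro x (rfl | hx)
    · by_contra hn
      refine hne M ?_
      filter_upwards [hSae] with ω hω
      rcases hsub hω with h | h
      · exact absurd (h ▸ hω) hn
      · exact h
    · obtain rfl : x = M := hx
      by_contra hn
      refine hne m ?_
      filter_upwards [hSae] with ω hω
      rcases hsub hω with h | h
      · exact h
      · obtain h : X ω = x := h
        exact absurd (h ▸ hω) hn
  · intro h
    rw [h] at hSae
    exact hSae
end

section
/- For every real V > 0 and every ε ∈ (0,1), there exists a nonnegative random variable X with E[X] < ∞ such that Var(√X) = V, essSup X = ∞, and E[(√X − √m_X)²] = (1 + ε)·V, where m_X := essInf X. Consequently, inf{E[(√X − √m_X)²] : X nonnegative, E[X] < ∞, Var(√X) = V, essSup X = ∞} = V. -/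
open MeasureTheory ProbabilityTheory Real

lemma aux_w : HasSum (fun n : ℕ => Real.exp (-((1 : NNReal) : ℝ)) * ((1 : NNReal) : ℝ) ^ n / (n.factorial : ℝ)) 1 :=
  hasSum_one_poissonMeasure 1

lemma aux_m1 : HasSum (fun n : ℕ => (Real.exp (-((1 : NNReal) : ℝ)) * ((1 : NNReal) : ℝ) ^ n / (n.factorial : ℝ)) * (n : ℝ)) 1 := by
  rw [← hasSum_nat_add_iff' 1]
  have h := aux_w
  convert! h using 1
  · funext n
    rw [Nat.factorial_succ]
    push_cast
    have : (n.factorial : ℝ) ≠ 0 := by positivity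
    have : (n : ℝ) + 1 ≠ 0 := by positivity
    simp
    field_simp
  · simp

lemma aux_m2 : HasSum (fun n : ℕ => (Real.exp (-((1 : NNReal) : ℝ)) * ((1 : NNReal) : ℝ) ^ n / (n.factorial : ℝ)) * (n : ℝ) ^ 2) 2 := by
  rw [← hasSum_nat_add_iff' 1]
  have h := aux_m1.add aux_w
  convert! h using 1
  · funext n
    rw [Nat.factorial_succ]
    push_cast
    have : (n.factorial : ℝ) ≠ 0 := by positivity
    have : (n : ℝ) + 1 ≠ 0 := by positivity
    simp
    field_simp
  · norm_num

lemma aux_i1 : Integrable (fun n : ℕ => (n : ℝ)) (poissonMeasure 1) := by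
  rw [integrable_poissonMeasure_iff]
  simpa using aux_m1.summable

lemma aux_i2 : Integrable (fun n : ℕ => (n : ℝ) ^ 2) (poissonMeasure 1) := by
  rw [integrable_poissonMeasure_iff]
  simpa using aux_m2.summable

lemma aux_e1 : ∫ n : ℕ, (n : ℝ) ∂(poissonMeasure 1) = 1 :=
  (hasSum_integral_poissonMeasure aux_i1).unique aux_m1

lemma aux_e2 : ∫ n : ℕ, (n : ℝ) ^ 2 ∂(poissonMeasure 1) = 2 :=
  (hasSum_integral_poissonMeasure aux_i2).unique aux_m2

/-- The mixture measure on the naturals. -/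
noncomputable def mixM (ε : ℝ) : Measure ℕ :=
  ENNReal.ofReal (1 - ε) • Measure.dirac 0 + ENNReal.ofReal (ε - ε ^ 2) • Measure.dirac 1
    + ENNReal.ofReal (ε ^ 2) • poissonMeasure 1

lemma mixM_prob {ε : ℝ} (h0 : 0 < ε) (h1 : ε < 1) : IsProbabilityMeasure (mixM ε) := by
  constructor
  have h2 : 0 ≤ ε - ε ^ 2 := by nlinarith
  simp only [mixM, Measure.add_apply, Measure.smul_apply, measure_univ, smul_eq_mul, mul_one]
  rw [← ENNReal.ofReal_add (by linarith) h2, ← ENNReal.ofReal_add (by linarith) (by positivity)]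
  simp

lemma mixM_integrable {ε : ℝ} {f : ℕ → ℝ} (hf : Integrable f (poissonMeasure 1)) :
    Integrable f (mixM ε) := by
  refine Integrable.add_measure (Integrable.add_measure ?_ ?_) ?_
  · exact (integrable_dirac (by simp)).smul_measure ENNReal.ofReal_ne_top
  · exact (integrable_dirac (by simp)).smul_measure ENNReal.ofReal_ne_top
  · exact hf.smul_measure ENNReal.ofReal_ne_top

lemma mixM_integral {ε : ℝ} (h0 : 0 < ε) (h1 : ε < 1) {f : ℕ → ℝ}
    (hf : Integrable f (poissonMeasure 1)) :
    ∫ n, f n ∂(mixM ε) = (1 - ε) * f 0 + (ε - ε ^ 2) * f 1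
      + ε ^ 2 * ∫ n, f n ∂(poissonMeasure 1) := by
  have h2 : 0 ≤ ε - ε ^ 2 := by nlinarith
  have i0 : Integrable f (ENNReal.ofReal (1 - ε) • Measure.dirac 0) :=
    (integrable_dirac (by simp)).smul_measure ENNReal.ofReal_ne_top
  have i1 : Integrable f (ENNReal.ofReal (ε - ε ^ 2) • Measure.dirac 1) :=
    (integrable_dirac (by simp)).smul_measure ENNReal.ofReal_ne_top
  rw [mixM, integral_add_measure (i0.add_measure i1)
    (hf.smul_measure ENNReal.ofReal_ne_top), integral_add_measure i0 i1]
  simp only [integral_smul_measure, integral_dirac, smul_eq_mul]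
  rw [ENNReal.toReal_ofReal (by linarith), ENNReal.toReal_ofReal h2,
    ENNReal.toReal_ofReal (by positivity)]

lemma mixM_ae {ε : ℝ} (h0 : 0 < ε) {p : ℕ → Prop} (h : ∀ᵐ n ∂(mixM ε), p n) (n : ℕ) : p n := by
  by_contra hn
  rw [ae_iff] at h
  have h3 : mixM ε {n} = 0 := measure_mono_null (by simpa using hn) h
  have h4 : ENNReal.ofReal (ε ^ 2) * poissonMeasure 1 {n} = 0 := by
    simp only [mixM, Measure.add_apply, Measure.smul_apply, smul_eq_mul] at h3
    exact (add_eq_zero.1 h3).2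
  rw [mul_eq_zero, poissonMeasure_singleton, ENNReal.ofReal_eq_zero, ENNReal.ofReal_eq_zero] at h4
  rcases h4 with h4 | h4
  · nlinarith [pow_pos h0 2]
  · have : 0 < Real.exp (-((1 : NNReal) : ℝ)) * ((1 : NNReal) : ℝ) ^ n / (n.factorial : ℝ) := by
      positivity
    linarith

lemma part_one (V : ℝ) (hV : 0 < V) : ∀ ε : ℝ, ε ∈ Set.Ioo (0 : ℝ) 1 →
      ∃ (Ω : Type) (_ : MeasurableSpace Ω) (μ : Measure Ω) (_ : IsProbabilityMeasure μ)
        (X : Ω → ℝ), Measurable X ∧ (∀ᵐ ω ∂μ, 0 ≤ X ω) ∧ Integrable X μ ∧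
        variance (fun ω => Real.sqrt (X ω)) μ = V ∧
        (¬ ∃ C : ℝ, ∀ᵐ ω ∂μ, X ω ≤ C) ∧
        (∫ ω, (Real.sqrt (X ω) - Real.sqrt (essInf X μ)) ^ 2 ∂μ) = (1 + ε) * V := by
  rintro ε ⟨h0, h1⟩
  have hp := mixM_prob h0 h1
  have hc : 0 < V / ε := by positivity
  have hs : ∀ n : ℕ, Real.sqrt (V / ε * (n : ℝ) ^ 2) = Real.sqrt (V / ε) * n := by
    intro n
    rw [Real.sqrt_mul hc.le, Real.sqrt_sq (by positivity)]
  have hsq : Real.sqrt (V / ε) ^ 2 = V / ε := Real.sq_sqrt hc.le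
  have hinf : essInf (fun n : ℕ => V / ε * (n : ℝ) ^ 2) (mixM ε) = 0 := by
    have : {a : ℝ | mixM ε {x : ℕ | V / ε * (x : ℝ) ^ 2 < a} = 0} = Set.Iic 0 := by
      ext a
      constructor
      · intro h
        have h' : ∀ᵐ x : ℕ ∂(mixM ε), ¬ (V / ε * (x : ℝ) ^ 2 < a) := by
          rw [ae_iff]; simpa using h
        have := mixM_ae h0 h' 0
        simpa using this
      · intro h
        have h' : a ≤ 0 := h
        have : {x : ℕ | V / ε * (x : ℝ) ^ 2 < a} = ∅ := by
          ext x
          have : 0 ≤ V / ε * (x : ℝ) ^ 2 := by positivity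
          simp only [Set.mem_ofPred_eq, Set.mem_empty_iff_false, iff_false, not_lt]
          linarith
        simp [this]
    rw [essInf_eq_sSup, this, csSup_Iic]
  have E1 : ∫ n : ℕ, (n : ℝ) ∂(mixM ε) = ε := by
    rw [mixM_integral h0 h1 aux_i1, aux_e1]; push_cast; ring
  have E2 : ∫ n : ℕ, (n : ℝ) ^ 2 ∂(mixM ε) = ε + ε ^ 2 := by
    rw [mixM_integral h0 h1 aux_i2, aux_e2]; push_cast; ring
  refine ⟨ℕ, inferInstance, mixM ε, hp, fun n => V / ε * (n : ℝ) ^ 2, .of_discrete,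
    ae_of_all _ fun n => by positivity, (mixM_integrable aux_i2).const_mul _, ?_, ?_, ?_⟩
  · simp only [hs]
    rw [variance_const_mul, hsq, variance_eq_sub]
    · simp only [Pi.pow_apply]
      rw [E1, E2]
      field_simp
      ring
    · exact (memLp_two_iff_integrable_sq (Measurable.of_discrete).aestronglyMeasurable).2
        (mixM_integrable aux_i2)
  · rintro ⟨C, hC⟩
    obtain ⟨n, hn⟩ := exists_nat_gt (C / (V / ε))
    have h2 := mixM_ae h0 hC (n + 1)
    rw [div_lt_iff₀ hc] at hn
    push_cast at h2
    have hn0 : (0 : ℝ) ≤ n := by positivity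
    have h3 : (n : ℝ) ≤ ((n : ℝ) + 1) ^ 2 := by nlinarith
    have := mul_le_mul_of_nonneg_left h3 hc.le
    linarith
  · rw [hinf]
    simp only [hs, Real.sqrt_zero, sub_zero, mul_pow, hsq]
    rw [integral_const_mul, E2]
    field_simp

/-- For every `V > 0` and `ε ∈ (0,1)` there is a nonnegative integrable random
variable `X` with `Var √X = V`, `essSup X = ∞` (essentially unbounded), and
`E (√X - √(essInf X))² = (1+ε) V`. Consequently the infimum of
`E (√X - √(essInf X))²` over this class equals `V`. -/
theorem inf_E_over_unbounded_class (V : ℝ) (hV : 0 < V) :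
    (∀ ε : ℝ, ε ∈ Set.Ioo (0 : ℝ) 1 →
      ∃ (Ω : Type) (_ : MeasurableSpace Ω) (μ : Measure Ω) (_ : IsProbabilityMeasure μ)
        (X : Ω → ℝ), Measurable X ∧ (∀ᵐ ω ∂μ, 0 ≤ X ω) ∧ Integrable X μ ∧
        variance (fun ω => Real.sqrt (X ω)) μ = V ∧
        (¬ ∃ C : ℝ, ∀ᵐ ω ∂μ, X ω ≤ C) ∧
        (∫ ω, (Real.sqrt (X ω) - Real.sqrt (essInf X μ)) ^ 2 ∂μ) = (1 + ε) * V) ∧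
    sInf {e : ℝ |
      ∃ (Ω : Type) (_ : MeasurableSpace Ω) (μ : Measure Ω) (_ : IsProbabilityMeasure μ)
        (X : Ω → ℝ), Measurable X ∧ (∀ᵐ ω ∂μ, 0 ≤ X ω) ∧ Integrable X μ ∧
        variance (fun ω => Real.sqrt (X ω)) μ = V ∧
        (¬ ∃ C : ℝ, ∀ᵐ ω ∂μ, X ω ≤ C) ∧
        e = ∫ ω, (Real.sqrt (X ω) - Real.sqrt (essInf X μ)) ^ 2 ∂μ} = V := by
  refine ⟨part_one V hV, ?_⟩
  apply csInf_eq_of_forall_ge_of_forall_gt_exists_lt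
  · obtain ⟨Ω, m, μ, hμ, X, a, b, c, d, e, f⟩ := part_one V hV (1 / 2) ⟨by norm_num, by norm_num⟩
    exact ⟨_, Ω, m, μ, hμ, X, a, b, c, d, e, rfl⟩
  · rintro _ ⟨Ω, m, μ, hμ, X, a, b, c, d, e, rfl⟩
    have hY : Measurable fun ω => Real.sqrt (X ω) := a.sqrt
    rw [← d, ← variance_sub_const hY.aestronglyMeasurable (Real.sqrt (essInf X μ))]
    exact variance_le_expectation_sq (hY.sub_const _).aestronglyMeasurable
  · intro w hw
    have hd : 0 < (w - V) / (2 * V) := div_pos (by linarith) (by linarith)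
    have hε : min (1 / 2) ((w - V) / (2 * V)) ∈ Set.Ioo (0 : ℝ) 1 :=
      ⟨lt_min (by norm_num) hd, (min_le_left _ _).trans_lt (by norm_num)⟩
    obtain ⟨Ω, m, μ, hμ, X, a, b, c, d, e, f⟩ := part_one V hV _ hε
    refine ⟨_, ⟨Ω, m, μ, hμ, X, a, b, c, d, e, rfl⟩, ?_⟩
    rw [f]
    have h1 : min (1 / 2) ((w - V) / (2 * V)) * V ≤ (w - V) / (2 * V) * V :=
      mul_le_mul_of_nonneg_right (min_le_right _ _) hV.le
    have h2 : (w - V) / (2 * V) * V = (w - V) / 2 := by field_simp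
    linarith
end

section
/- For any real numbers V and E with E > V > 0: sup{ E[X] − exp(E[log X]) : X nonnegative random variable taking at most two values, Var(√X) = V, E[(√X − √m_X)²] = E } = max(2V, E), where m_X := essInf X. In particular, for every δ > 0 there exists a random variable X taking at most two positive values with Var(√X) = V, E[(√X − √m_X)²] = E, and E[X] − exp(E[log X]) > max(2V, E) − δ. -/
open MeasureTheory ProbabilityTheory Real


/-- integral comparison on [0,∞) -/
lemma mono_aux (f f' : ℝ → ℝ) (h0 : f 0 = 0) (hd : ∀ t, 0 ≤ t → HasDerivAt f (f' t) t)
    (hf : ∀ t, 0 ≤ t → 0 ≤ f' t) (t : ℝ) (ht : 0 ≤ t) : 0 ≤ f t := by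
  have hm : MonotoneOn f (Set.Ici 0) := by
    apply monotoneOn_of_deriv_nonneg (convex_Ici 0)
    · exact fun x hx => (hd x hx).continuousAt.continuousWithinAt
    · intro x hx
      rw [interior_Ici] at hx
      exact (hd x (le_of_lt hx)).differentiableAt.differentiableWithinAt
    · intro x hx
      rw [interior_Ici] at hx
      rw [(hd x (le_of_lt hx)).deriv]
      exact hf x (le_of_lt hx)
  rw [← h0]
  exact hm (Set.mem_Ici.2 le_rfl) ht ht

lemma pow_bern (s t : ℝ) (hs0 : 0 ≤ s) (hs : s ≤ 1) (ht : 0 ≤ t) :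
    (1 + t) ^ (s - 1) ≤ 1 - (1 - s) * t + (1 - s) * t ^ 2 := by
  have h1 : (1 + t) ^ s ≤ 1 + s * t :=
    rpow_one_add_le_one_add_mul_self (by linarith) hs0 hs
  have hp : 0 < 1 + t := by linarith
  rw [Real.rpow_sub_one hp.ne', div_le_iff₀ hp]
  have : 0 ≤ (1 - s) * t ^ 3 := mul_nonneg (by linarith) (by positivity)
  nlinarith

lemma pow_bern' (s t : ℝ) (hs0 : 0 ≤ s) (hs : s ≤ 1) (ht : 0 ≤ t) :
    1 - (1 - s) * t ≤ (1 + t) ^ (s - 1) := by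
  have hp : 0 < 1 + t := by linarith
  have h1 : (1 + t) ^ (1 - s) ≤ 1 + (1 - s) * t :=
    rpow_one_add_le_one_add_mul_self (by linarith) (by linarith) (by linarith)
  have h2 : (1 + t) ^ (s - 1) = ((1 + t) ^ (1 - s))⁻¹ := by
    rw [← Real.rpow_neg hp.le]; congr 1; ring
  have h3 : 0 < (1 + t) ^ (1 - s) := Real.rpow_pos_of_pos hp _
  rw [h2, ← one_div, le_div_iff₀ h3]
  by_cases h4 : 0 ≤ 1 - (1 - s) * t
  · nlinarith [sq_nonneg ((1 - s) * t)]
  · nlinarith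

lemma lower_pow (s t : ℝ) (hs0 : 0 ≤ s) (hs : s ≤ 1) (ht : 0 ≤ t) :
    1 + s * t - s * (1 - s) / 2 * t ^ 2 ≤ (1 + t) ^ s := by
  have := mono_aux (fun t => (1 + t) ^ s - (1 + s * t - s * (1 - s) / 2 * t ^ 2))
    (fun t => s * ((1 + t) ^ (s - 1) - (1 - (1 - s) * t))) (by simp) ?_ ?_ t ht
  · simpa using this
  · intro t ht
    have h1 : HasDerivAt (fun t : ℝ => 1 + t) 1 t := (hasDerivAt_id t).const_add 1
    have h2 := h1.rpow_const (p := s) (Or.inl (by linarith))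
    have h3 := (((hasDerivAt_id t).const_mul s).const_add 1).sub
      ((hasDerivAt_pow 2 t).const_mul (s * (1 - s) / 2))
    refine (h2.sub h3).congr_deriv ?_
    push_cast; ring
  · intro t ht
    exact mul_nonneg hs0 (by linarith [pow_bern' s t hs0 hs ht])

lemma upper_pow (s t : ℝ) (hs0 : 0 ≤ s) (hs : s ≤ 1) (ht : 0 ≤ t) :
    (1 + t) ^ s ≤ 1 + s * t - s * (1 - s) / 2 * t ^ 2 + s * (1 - s) / 3 * t ^ 3 := by
  have := mono_aux (fun t => (1 + s * t - s * (1 - s) / 2 * t ^ 2 + s * (1 - s) / 3 * t ^ 3) - (1 + t) ^ s)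
    (fun t => s * ((1 - (1 - s) * t + (1 - s) * t ^ 2) - (1 + t) ^ (s - 1))) (by simp) ?_ ?_ t ht
  · simpa using this
  · intro t ht
    have h1 : HasDerivAt (fun t : ℝ => 1 + t) 1 t := (hasDerivAt_id t).const_add 1
    have h2 := h1.rpow_const (p := s) (Or.inl (by linarith))
    have h3 := ((((hasDerivAt_id t).const_mul s).const_add 1).sub
      ((hasDerivAt_pow 2 t).const_mul (s * (1 - s) / 2))).add
      ((hasDerivAt_pow 3 t).const_mul (s * (1 - s) / 3))
    refine (h3.sub h2).congr_deriv ?_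
    push_cast; ring
  · intro t ht
    exact mul_nonneg hs0 (by linarith [pow_bern s t hs0 hs ht])

/-- the two-point functional -/
noncomputable def DD (p x y : ℝ) : ℝ :=
  ((1 - p) * x + p * y) - Real.exp ((1 - p) * Real.log x + p * Real.log y)

lemma exp_eq (p a h : ℝ) (ha : 0 < a) (hh : 0 < h) :
    Real.exp ((1 - p) * Real.log (a ^ 2) + p * Real.log ((a + h) ^ 2))
      = a ^ 2 * (1 + h / a) ^ (2 * p) := by
  have h1 : 0 < 1 + h / a := by positivity
  have h2 : a + h = a * (1 + h / a) := by field_simp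
  rw [h2, mul_pow, Real.log_mul (by positivity) (by positivity), Real.rpow_def_of_pos h1,
    Real.log_pow (n := 2) (1 + h / a)]
  conv_rhs => rw [← Real.exp_log (show 0 < a ^ 2 by positivity), ← Real.exp_add]
  congr 1; push_cast; ring

lemma DD_upper (p a h : ℝ) (hp : 0 < p) (hp1 : p < 1) (ha : 0 ≤ a) (hh : 0 < h) :
    DD p (a ^ 2) ((a + h) ^ 2) ≤ max (2 * (p * (1 - p) * h ^ 2)) (p * h ^ 2) := by
  rcases ha.eq_or_lt with rfl | ha
  · refine le_max_of_le_right ?_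
    unfold DD
    have := Real.exp_pos ((1 - p) * Real.log (0 ^ 2) + p * Real.log ((0 + h) ^ 2))
    nlinarith
  unfold DD
  rw [exp_eq p a h ha hh]
  obtain ⟨t, ht⟩ : ∃ t, t = h / a := ⟨_, rfl⟩
  have hta : h = a * t := by rw [ht]; field_simp
  have ht0 : 0 < t := by rw [ht]; positivity
  rw [← ht]
  subst hta
  rcases le_total (1/2) p with h2 | h2
  · refine le_max_of_le_right ?_
    have := one_add_mul_self_le_rpow_one_add (s := t) (p := 2 * p) (by linarith) (by linarith)
    nlinarith [mul_le_mul_of_nonneg_left this (sq_nonneg a)]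
  · refine le_max_of_le_left ?_
    have := lower_pow (2 * p) t (by linarith) (by linarith) ht0.le
    nlinarith [mul_le_mul_of_nonneg_left this (sq_nonneg a)]

lemma DD_lower (p h δ : ℝ) (hp : 0 < p) (hp1 : p < 1) (hh : 0 < h) (hδ : 0 < δ) :
    ∃ a, 0 < a ∧ max (2 * (p * (1 - p) * h ^ 2)) (p * h ^ 2) - δ < DD p (a ^ 2) ((a + h) ^ 2) := by
  rcases le_total (1/2) p with h2 | h2
  · have hm : max (2 * (p * (1 - p) * h ^ 2)) (p * h ^ 2) = p * h ^ 2 := by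
      apply max_eq_right
      nlinarith [mul_nonneg (mul_nonneg hp.le (sub_nonneg.2 h2)) (sq_nonneg h)]
    rw [hm]
    have hc : ContinuousAt (fun a : ℝ => a ^ (2 * (1 - p)) * (a + h) ^ (2 * p)) 0 := by
      apply ContinuousAt.mul
      · exact Real.continuousAt_rpow_const _ _ (Or.inr (by linarith))
      · exact (continuousAt_id.add continuousAt_const).rpow_const (Or.inl (by simp [hh.ne']))
    have h0 : (fun a : ℝ => a ^ (2 * (1 - p)) * (a + h) ^ (2 * p)) 0 < δ := by
      simp only []
      rw [Real.zero_rpow (by linarith)]; linarith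
    have hev := (hc.eventually_lt_const h0).filter_mono (nhdsWithin_le_nhds (s := Set.Ioi 0))
    obtain ⟨a, ha, ha0⟩ := (hev.and self_mem_nhdsWithin).exists
    have ha0 : 0 < a := ha0
    refine ⟨a, ha0, ?_⟩
    have he : Real.exp ((1 - p) * Real.log (a ^ 2) + p * Real.log ((a + h) ^ 2))
       = a ^ (2 * (1 - p)) * (a + h) ^ (2 * p) := by
      rw [Real.rpow_def_of_pos ha0, Real.rpow_def_of_pos (by linarith), ← Real.exp_add,
        Real.log_pow, Real.log_pow]
      congr 1; push_cast; ring
    unfold DD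
    rw [he]
    nlinarith [mul_pos ha0 hh, mul_pos hp (mul_pos ha0 hh), sq_nonneg a]
  · have hm : max (2 * (p * (1 - p) * h ^ 2)) (p * h ^ 2) = 2 * (p * (1 - p) * h ^ 2) := by
      apply max_eq_left
      nlinarith [mul_nonneg (mul_nonneg hp.le (sub_nonneg.2 h2)) (sq_nonneg h)]
    rw [hm]
    obtain ⟨C, hC⟩ : ∃ C, C = 2 * p * (1 - 2 * p) / 3 * h ^ 3 := ⟨_, rfl⟩
    have hC0 : 0 ≤ C := by
      rw [hC]
      have : 0 ≤ 1 - 2 * p := by linarith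
      positivity
    refine ⟨(C + 1) / δ, by positivity, ?_⟩
    obtain ⟨a, ha⟩ : ∃ a, a = (C + 1) / δ := ⟨_, rfl⟩
    rw [← ha]
    have ha0 : 0 < a := by rw [ha]; positivity
    have hCa : C / a < δ := by
      rw [div_lt_iff₀ ha0, ha]; field_simp; linarith
    unfold DD
    rw [exp_eq p a h ha0 hh]
    have := upper_pow (2 * p) (h / a) (by linarith) (by linarith) (by positivity)
    have h5 := mul_le_mul_of_nonneg_left this (sq_nonneg a)
    have h6 : a ^ 2 * (1 + 2 * p * (h / a) - 2 * p * (1 - 2 * p) / 2 * (h / a) ^ 2 + 2 * p * (1 - 2 * p) / 3 * (h / a) ^ 3) = a ^ 2 + 2 * p * h * a - p * (1 - 2 * p) * h ^ 2 + C / a := by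
      rw [hC]; field_simp
    rw [h6] at h5
    nlinarith

section
variable {Ω : Type} [MeasurableSpace Ω] (μ : Measure Ω) [IsProbabilityMeasure μ] (X : Ω → ℝ)

lemma comp_eq (x y : ℝ) (hxy : ∀ ω, X ω = x ∨ X ω = y) (f : ℝ → ℝ) :
    (fun ω => f (X ω)) = fun ω => f x + Set.indicator {ω | X ω = y} (fun _ => f y - f x) ω := by
  funext ω
  by_cases h : X ω = y
  · simp [Set.indicator, h]
  · have := (hxy ω).resolve_right h
    have hxy' : x ≠ y := fun h' => h (this.trans h')
    simp [Set.indicator, this, hxy']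

lemma integrable_comp (hX : Measurable X) (x y : ℝ) (hxy : ∀ ω, X ω = x ∨ X ω = y) (f : ℝ → ℝ) :
    Integrable (fun ω => f (X ω)) μ := by
  rw [comp_eq X x y hxy f]
  exact (integrable_const _).add ((integrable_const _).indicator (hX (measurableSet_singleton y)))

lemma integral_comp (hX : Measurable X) (x y : ℝ) (hxy : ∀ ω, X ω = x ∨ X ω = y) (f : ℝ → ℝ) :
    ∫ ω, f (X ω) ∂μ = (1 - μ.real {ω | X ω = y}) * f x + μ.real {ω | X ω = y} * f y := by
  rw [comp_eq X x y hxy f]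
  have hm : MeasurableSet {ω | X ω = y} := hX (measurableSet_singleton y)
  rw [integral_add (integrable_const _) ((integrable_const _).indicator hm),
    integral_indicator_const _ hm]
  simp
  ring

lemma variance_comp (hX : Measurable X) (x y : ℝ) (hxy : ∀ ω, X ω = x ∨ X ω = y) :
    variance (fun ω => Real.sqrt (X ω)) μ =
      μ.real {ω | X ω = y} * (1 - μ.real {ω | X ω = y}) * (√y - √x) ^ 2 := by
  rw [variance_eq_integral hX.sqrt.aemeasurable, integral_comp μ X hX x y hxy Real.sqrt]
  rw [integral_comp μ X hX x y hxy (fun z => (√z - ((1 - μ.real {ω | X ω = y}) * √x + μ.real {ω | X ω = y} * √y)) ^ 2)]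
  ring

lemma essInf_comp (x y : ℝ) (hxlty : x < y) (hxy : ∀ ω, X ω = x ∨ X ω = y)
    (hp : μ.real {ω | X ω = y} < 1) : essInf X μ = x := by
  rw [essInf, Filter.liminf_eq]
  have : {a | ∀ᵐ ω ∂μ, a ≤ X ω} = Set.Iic x := by
    ext a
    simp only [Set.mem_ofPred_eq, Set.mem_Iic]
    constructor
    · intro h
      by_contra! hlt
      have h1 : ∀ᵐ ω ∂μ, X ω = y := by
        filter_upwards [h] with ω hω
        rcases hxy ω with h | h
        · linarith
        · exact h
      have : μ {ω | X ω = y} = 1 := by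
        rw [← measure_univ (μ := μ)]
        apply measure_congr
        filter_upwards [h1] with ω hω
        exact eq_true hω |>.trans (by rfl)
      simp [Measure.real, this] at hp
    · intro h
      filter_upwards with ω
      rcases hxy ω with h | h <;> linarith
  rw [this, csSup_Iic]

end

lemma build (p a h : ℝ) (hp : 0 < p) (hp1 : p < 1) (ha : 0 < a) (hh : 0 < h) :
    ∃ (Ω : Type) (_ : MeasurableSpace Ω) (μ : Measure Ω) (_ : IsProbabilityMeasure μ)
        (X : Ω → ℝ), Measurable X ∧ Integrable X μ ∧
        Integrable (fun ω => Real.log (X ω)) μ ∧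
        (∀ ω, X ω = a ^ 2 ∨ X ω = (a + h) ^ 2) ∧
        variance (fun ω => Real.sqrt (X ω)) μ = p * (1 - p) * h ^ 2 ∧
        (∫ ω, (Real.sqrt (X ω) - Real.sqrt (essInf X μ)) ^ 2 ∂μ) = p * h ^ 2 ∧
        (∫ ω, X ω ∂μ) - Real.exp (∫ ω, Real.log (X ω) ∂μ) = DD p (a ^ 2) ((a + h) ^ 2) := by
  let μ : Measure Bool := ENNReal.ofReal (1 - p) • Measure.dirac false + ENNReal.ofReal p • Measure.dirac true
  have hμ : IsProbabilityMeasure μ := ⟨by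
    simp [μ]
    rw [← ENNReal.ofReal_add (by linarith) (by linarith)]; simp⟩
  let X : Bool → ℝ := fun b => if b then (a + h) ^ 2 else a ^ 2
  have hX : Measurable X := measurable_of_finite X
  have hxy : ∀ ω, X ω = a ^ 2 ∨ X ω = (a + h) ^ 2 := by
    intro ω; cases ω <;> simp [X]
  have hlt : a ^ 2 < (a + h) ^ 2 := by nlinarith [mul_pos ha hh]
  have hset : {ω | X ω = (a + h) ^ 2} = {true} := by
    ext ω; cases ω <;> simp [X, hlt.ne]
  have hpm : μ.real {ω | X ω = (a + h) ^ 2} = p := by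
    rw [hset]
    simp [Measure.real, μ, hp.le]
  have hs1 : √(a ^ 2) = a := Real.sqrt_sq ha.le
  have hs2 : √((a + h) ^ 2) = a + h := Real.sqrt_sq (by linarith)
  refine ⟨Bool, inferInstance, μ, hμ, X, hX, integrable_comp μ X hX _ _ hxy (fun z => z),
    integrable_comp μ X hX _ _ hxy Real.log, hxy, ?_, ?_, ?_⟩
  · rw [variance_comp μ X hX _ _ hxy, hpm, hs1, hs2]; ring
  · rw [essInf_comp μ X _ _ hlt hxy (by rw [hpm]; exact hp1),
      integral_comp μ X hX _ _ hxy (fun z => (√z - √(a ^ 2)) ^ 2), hpm, hs1, hs2]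
    ring
  · rw [integral_comp μ X hX _ _ hxy (fun z => z), integral_comp μ X hX _ _ hxy Real.log, hpm]
    rfl

lemma upper_lt {Ω : Type} [MeasurableSpace Ω] (μ : Measure Ω) [IsProbabilityMeasure μ] (X : Ω → ℝ)
    (hX : Measurable X) (h0 : ∀ ω, 0 ≤ X ω) (x y V E : ℝ) (hV : 0 < V) (hlt : x < y)
    (hxy : ∀ ω, X ω = x ∨ X ω = y)
    (hv : variance (fun ω => Real.sqrt (X ω)) μ = V)
    (he : (∫ ω, (Real.sqrt (X ω) - Real.sqrt (essInf X μ)) ^ 2 ∂μ) = E) :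
    (∫ ω, X ω ∂μ) - Real.exp (∫ ω, Real.log (X ω) ∂μ) ≤ max (2 * V) E := by
  rw [variance_comp μ X hX x y hxy] at hv
  have hp0 : 0 ≤ μ.real {ω | X ω = y} := measureReal_nonneg
  have hp1 : μ.real {ω | X ω = y} ≤ 1 := measureReal_le_one
  have hp0' : μ.real {ω | X ω = y} ≠ 0 := by
    intro h; rw [h] at hv; simp at hv; linarith
  have hp1' : μ.real {ω | X ω = y} ≠ 1 := by
    intro h; rw [h] at hv; simp at hv; linarith
  have hp : 0 < μ.real {ω | X ω = y} := lt_of_le_of_ne hp0 hp0'.symm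
  have hp1 : μ.real {ω | X ω = y} < 1 := lt_of_le_of_ne hp1 hp1'
  have hx0 : 0 ≤ x := by
    by_contra! hneg
    apply hp1'
    have : {ω | X ω = y} = Set.univ := by
      ext ω
      simp only [Set.mem_ofPred_eq, Set.mem_univ, iff_true]
      refine (hxy ω).resolve_left ?_
      intro h; linarith [h0 ω]
    rw [this]; simp
  rw [essInf_comp μ X x y hlt hxy hp1,
    integral_comp μ X hX x y hxy (fun z => (√z - √x) ^ 2)] at he
  rw [integral_comp μ X hX x y hxy (fun z => z), integral_comp μ X hX x y hxy Real.log]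
  have := DD_upper (μ.real {ω | X ω = y}) (√x) (√y - √x) hp hp1 (Real.sqrt_nonneg x)
    (sub_pos.2 (Real.sqrt_lt_sqrt hx0 hlt))
  rw [add_sub_cancel, Real.sq_sqrt hx0, Real.sq_sqrt (hx0.trans hlt.le), hv] at this
  have h7 : μ.real {ω | X ω = y} * (√y - √x) ^ 2 = E := by rw [← he]; ring
  rw [h7] at this
  exact this

/-- Theorem, upper bound over two-valued random variables: for `E > V > 0`, the
supremum of `D_X = E X - exp (E log X)` over nonnegative random variables `X` taking
at most two values, with `log X` integrable, `Var √X = V` and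
`E (√X - √(essInf X))² = E`, equals `max (2V) E`; in particular, for every `δ > 0`
there is such an `X` taking at most two positive values with `D_X > max (2V) E - δ`. -/
theorem sup_D_two_valued (V E : ℝ) (hV : 0 < V) (hVE : V < E) :
    sSup {d : ℝ |
      ∃ (Ω : Type) (_ : MeasurableSpace Ω) (μ : Measure Ω) (_ : IsProbabilityMeasure μ)
        (X : Ω → ℝ), Measurable X ∧ (∀ ω, 0 ≤ X ω) ∧ Integrable X μ ∧
        Integrable (fun ω => Real.log (X ω)) μ ∧
        (∃ x y : ℝ, ∀ ω, X ω = x ∨ X ω = y) ∧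
        variance (fun ω => Real.sqrt (X ω)) μ = V ∧
        (∫ ω, (Real.sqrt (X ω) - Real.sqrt (essInf X μ)) ^ 2 ∂μ) = E ∧
        d = (∫ ω, X ω ∂μ) - Real.exp (∫ ω, Real.log (X ω) ∂μ)} = max (2 * V) E ∧
    ∀ δ : ℝ, 0 < δ →
      ∃ (Ω : Type) (_ : MeasurableSpace Ω) (μ : Measure Ω) (_ : IsProbabilityMeasure μ)
        (X : Ω → ℝ), Measurable X ∧ Integrable X μ ∧
        Integrable (fun ω => Real.log (X ω)) μ ∧
        (∃ x y : ℝ, 0 < x ∧ 0 < y ∧ ∀ ω, X ω = x ∨ X ω = y) ∧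
        variance (fun ω => Real.sqrt (X ω)) μ = V ∧
        (∫ ω, (Real.sqrt (X ω) - Real.sqrt (essInf X μ)) ^ 2 ∂μ) = E ∧
        (∫ ω, X ω ∂μ) - Real.exp (∫ ω, Real.log (X ω) ∂μ) > max (2 * V) E - δ := by
  have hE : 0 < E := hV.trans hVE
  have hEV : 0 < E - V := sub_pos.2 hVE
  have hp : 0 < 1 - V / E := by rw [sub_pos, div_lt_one hE]; exact hVE
  have hp1 : 1 - V / E < 1 := by have := div_pos hV hE; linarith
  have hh : 0 < E / √(E - V) := by positivity
  have hh2 : (E / √(E - V)) ^ 2 = E ^ 2 / (E - V) := by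
    rw [div_pow, Real.sq_sqrt hEV.le]
  have e1 : (1 - V / E) * (1 - (1 - V / E)) * (E / √(E - V)) ^ 2 = V := by
    rw [hh2]; field_simp; ring
  have e2 : (1 - V / E) * (E / √(E - V)) ^ 2 = E := by
    rw [hh2]; field_simp
  have key : ∀ δ : ℝ, 0 < δ →
      ∃ (Ω : Type) (_ : MeasurableSpace Ω) (μ : Measure Ω) (_ : IsProbabilityMeasure μ)
        (X : Ω → ℝ), Measurable X ∧ Integrable X μ ∧
        Integrable (fun ω => Real.log (X ω)) μ ∧
        (∃ x y : ℝ, 0 < x ∧ 0 < y ∧ ∀ ω, X ω = x ∨ X ω = y) ∧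
        variance (fun ω => Real.sqrt (X ω)) μ = V ∧
        (∫ ω, (Real.sqrt (X ω) - Real.sqrt (essInf X μ)) ^ 2 ∂μ) = E ∧
        (∫ ω, X ω ∂μ) - Real.exp (∫ ω, Real.log (X ω) ∂μ) > max (2 * V) E - δ := by
    intro δ hδ
    obtain ⟨a, ha, hD⟩ := DD_lower (1 - V / E) (E / √(E - V)) δ hp hp1 hh hδ
    obtain ⟨Ω, mΩ, μ, hμ, X, hX, hi, hl, hxy, hv, he, hd⟩ :=
      build (1 - V / E) a (E / √(E - V)) hp hp1 ha hh
    rw [e1, e2] at hD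
    refine ⟨Ω, mΩ, μ, hμ, X, hX, hi, hl, ⟨_, _, by positivity, by positivity, hxy⟩,
      hv.trans e1, he.trans e2, ?_⟩
    rw [hd]; exact hD
  refine ⟨?_, key⟩
  apply csSup_eq_of_forall_le_of_forall_lt_exists_gt
  · obtain ⟨Ω, mΩ, μ, hμ, X, hX, hi, hl, ⟨x, y, hx, hy, hxy⟩, hv, he, hd⟩ := key 1 one_pos
    exact ⟨_, Ω, mΩ, μ, hμ, X, hX, fun ω => by rcases hxy ω with h | h <;> rw [h] <;> positivity,
      hi, hl, ⟨x, y, hxy⟩, hv, he, rfl⟩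
  · rintro d ⟨Ω, mΩ, μ, hμ, X, hX, h0, hi, hl, ⟨x, y, hxy⟩, hv, he, rfl⟩
    rcases lt_trichotomy x y with h | h | h
    · exact upper_lt μ X hX h0 x y V E hV h hxy hv he
    · exfalso
      rw [variance_comp μ X hX x y hxy, h] at hv
      simp at hv
      linarith
    · exact upper_lt μ X hX h0 y x V E hV h (fun ω => (hxy ω).symm) hv he
  · intro w hw
    obtain ⟨Ω, mΩ, μ, hμ, X, hX, hi, hl, ⟨x, y, hx, hy, hxy⟩, hv, he, hd⟩ :=
      key (max (2 * V) E - w) (sub_pos.2 hw)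
    exact ⟨_, ⟨Ω, mΩ, μ, hμ, X, hX, fun ω => by rcases hxy ω with h | h <;> rw [h] <;> positivity,
      hi, hl, ⟨x, y, hxy⟩, hv, he, rfl⟩, by linarith⟩
end

section
/- Let 0 ≤ u < v be real numbers, p ∈ (0,1), and q := 1 − p. Define ψ(c) := p(u+c)² + q(v+c)² − (u+c)^{2p}·(v+c)^{2q} for c ∈ (−u, ∞). Then ψ(c) → 2pq(v−u)² as c → ∞. -/
open Real Filter

theorem psi_aux (q : ℝ) :
    Tendsto (fun t : ℝ => (1 + 2 * q * t + q * t ^ 2 - (1 + t) ^ (2 * q)) / t ^ 2)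
      (nhdsWithin 0 (Set.Ioi 0)) (nhds (2 * (1 - q) * q)) := by
  have hpow : ∀ (r t : ℝ), 0 ≤ t →
      HasDerivAt (fun t : ℝ => (1 + t) ^ r) (r * (1 + t) ^ (r - 1)) t := by
    intro r t ht
    have h := ((hasDerivAt_id t).const_add 1).rpow_const (p := r)
      (Or.inl (by simp only [id]; positivity))
    simpa using h
  have hF : ∀ t : ℝ, 0 ≤ t →
      HasDerivAt (fun t : ℝ => 1 + 2 * q * t + q * t ^ 2 - (1 + t) ^ (2 * q))
        (2 * q + 2 * q * t - 2 * q * (1 + t) ^ (2 * q - 1)) t := by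
    intro t ht
    have h := ((((hasDerivAt_id t).const_mul (2 * q)).const_add 1).add
      (((hasDerivAt_id t).pow 2).const_mul q)).sub (hpow (2 * q) t ht)
    refine HasDerivAt.congr_deriv h ?_
    simp only [id]
    push_cast
    ring
  have hG : HasDerivAt (fun t : ℝ => 2 * q + 2 * q * t - 2 * q * (1 + t) ^ (2 * q - 1))
      (2 * (2 * (1 - q) * q)) 0 := by
    have h := (((hasDerivAt_id (0 : ℝ)).const_mul (2 * q)).const_add (2 * q)).sub
      ((hpow (2 * q - 1) 0 le_rfl).const_mul (2 * q))
    refine HasDerivAt.congr_deriv h ?_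
    simp
    ring
  have hpos : ∀ᶠ t : ℝ in nhdsWithin 0 (Set.Ioi 0), 0 < t := self_mem_nhdsWithin
  refine HasDerivAt.lhopital_zero_nhdsGT (g' := fun t => 2 * t)
    (hpos.mono fun t ht => hF t ht.le) ?_ ?_ ?_ ?_ ?_
  · refine hpos.mono fun t ht => ?_
    simpa using hasDerivAt_pow 2 t
  · exact hpos.mono fun t ht => by positivity
  · have h := (hF 0 le_rfl).continuousAt.tendsto
    simp at h
    exact h.mono_left nhdsWithin_le_nhds
  · have h : ContinuousAt (fun t : ℝ => t ^ 2) 0 := by fun_prop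
    have h := h.tendsto
    simp at h
    exact h.mono_left nhdsWithin_le_nhds
  · have h := (hasDerivAt_iff_tendsto_slope.1 hG).mono_left
      (nhdsWithin_mono 0 (s := Set.Ioi (0 : ℝ)) (fun x hx => (ne_of_gt hx : x ≠ 0)))
    have h2 := h.div_const 2
    rw [mul_div_cancel_left₀ _ (two_ne_zero)] at h2
    refine h2.congr' (hpos.mono fun t ht => ?_)
    simp [slope_def_field]
    field_simp

/-- Limit at infinity of `ψ(c) = p (u+c)² + q (v+c)² - (u+c)^{2p} (v+c)^{2q}`:
`ψ(c) → 2 p q (v-u)²` as `c → ∞`. -/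
theorem psi_tendsto_atTop (u v p : ℝ) (hu : 0 ≤ u) (huv : u < v)
    (hp : p ∈ Set.Ioo (0 : ℝ) 1) (q : ℝ) (hq : q = 1 - p) :
    Tendsto
      (fun c : ℝ => p * (u + c) ^ 2 + q * (v + c) ^ 2 -
        (u + c) ^ (2 * p) * (v + c) ^ (2 * q))
      atTop (nhds (2 * p * q * (v - u) ^ 2)) := by
  have hd : 0 < v - u := sub_pos.2 huv
  have hx : Tendsto (fun c : ℝ => u + c) atTop atTop := tendsto_atTop_add_const_left _ _ tendsto_id
  have ht : Tendsto (fun c : ℝ => (v - u) / (u + c)) atTop (nhdsWithin 0 (Set.Ioi 0)) := by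
    refine tendsto_nhdsWithin_iff.2 ⟨hx.const_div_atTop _, ?_⟩
    filter_upwards [hx.eventually_gt_atTop 0] with c hc
    exact div_pos hd hc
  have h := ((psi_aux q).comp ht).mul_const ((v - u) ^ 2)
  have hpq : p = 1 - q := by linarith
  rw [← hpq] at h
  refine h.congr' ?_
  filter_upwards [hx.eventually_gt_atTop 0] with c hc
  have e : v + c = (u + c) * (1 + (v - u) / (u + c)) := by field_simp; ring
  have h1 : 0 < 1 + (v - u) / (u + c) := by positivity
  have e2 : (u + c) ^ (2 * p) * (v + c) ^ (2 * q)
      = (u + c) ^ 2 * (1 + (v - u) / (u + c)) ^ (2 * q) := by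
    rw [e, mul_rpow hc.le h1.le, ← mul_assoc, ← rpow_add hc]
    congr 1
    rw [← rpow_natCast]
    congr 1
    push_cast
    linarith
  rw [e2]
  simp only [Function.comp]
  generalize (1 + (v - u) / (u + c)) ^ (2 * q) = w
  rw [hpq]
  have := hd.ne'
  field_simp
  ring
end

section
/- Let 0 ≤ u < v be real numbers, p ∈ (0,1), and q := 1 − p. Define ψ(c) := p(u+c)² + q(v+c)² − (u+c)^{2p}·(v+c)^{2q} for c ∈ [−u, ∞). Then ψ is monotone on [−u, ∞): nondecreasing if p ≥ q and nonincreasing if p ≤ q. Consequently, sup_{c ∈ [−u,∞)} ψ(c) = max(q(v−u)², 2pq(v−u)²) and inf_{c ∈ [−u,∞)} ψ(c) = min(q(v−u)², 2pq(v−u)²), with ψ(−u) = q(v−u)². -/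
open Real Filter

lemma aux_log (s m : ℝ) (hs : 0 ≤ s) (hs1 : s ≤ 1) (hm : 0 ≤ m) (hm1 : m < 1) :
    log (1 + s * m) - log (1 - s * m) ≤ s * (log (1 + m) - log (1 - m)) := by
  have hsm : 0 ≤ s * m := mul_nonneg hs hm
  have hsm1 : s * m < 1 := by nlinarith
  have h1 := hasSum_log_sub_log_of_abs_lt_one (x := s * m) (by rwa [abs_of_nonneg hsm])
  have h2 := (hasSum_log_sub_log_of_abs_lt_one (x := m) (by rwa [abs_of_nonneg hm])).mul_left s
  refine hasSum_le (fun k => ?_) h1 h2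
  have h3 : s ^ (2 * k + 1) ≤ s := pow_le_of_le_one hs hs1 (by omega)
  rw [mul_pow]
  have h4 : 0 ≤ (2 : ℝ) * (1 / (2 * (k : ℝ) + 1)) * m ^ (2 * k + 1) := by positivity
  nlinarith [mul_le_mul_of_nonneg_right h3 h4]

lemma aux_rpow (a b x y : ℝ) (ha : 0 < a) (hab : a ≤ b) (h1 : a + b = 1) (hx : 0 < x)
    (hxy : x < y) :
    a * x + b * y ≤ (a * y + b * x) * (x ^ (a - b) * y ^ (b - a)) := by
  have hy : 0 < y := hx.trans hxy
  have hb : 0 < b := ha.trans_le hab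
  have key := aux_log (b - a) ((y - x) / (y + x)) (by linarith) (by linarith)
    (div_nonneg (by linarith) (by linarith)) (by rw [div_lt_one (by linarith)]; linarith)
  have hyx : y + x ≠ 0 := by positivity
  have e1 : 1 + (b - a) * ((y - x) / (y + x)) = (a * x + b * y) * (2 / (y + x)) := by
    obtain rfl : b = 1 - a := by linarith
    field_simp; ring
  have e2 : 1 - (b - a) * ((y - x) / (y + x)) = (a * y + b * x) * (2 / (y + x)) := by
    obtain rfl : b = 1 - a := by linarith
    field_simp; ring
  have e3 : 1 + (y - x) / (y + x) = y * (2 / (y + x)) := by field_simp; ring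
  have e4 : 1 - (y - x) / (y + x) = x * (2 / (y + x)) := by field_simp; ring
  have hp1 : 0 < a * x + b * y := by positivity
  have hp2 : 0 < a * y + b * x := by positivity
  have h2 : (2 / (y + x)) ≠ 0 := by positivity
  rw [e1, e2, e3, e4, log_mul hp1.ne' h2, log_mul hp2.ne' h2, log_mul hy.ne' h2,
    log_mul hx.ne' h2] at key
  rw [← log_le_log_iff hp1 (by positivity), log_mul hp2.ne' (by positivity),
    log_mul (by positivity) (by positivity), log_rpow hx, log_rpow hy]
  linarith

lemma aux_deriv (p d x : ℝ) (hd : 0 < d) (hx : 0 < x) :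
    HasDerivAt (fun x : ℝ => p * x ^ 2 + (1 - p) * (x + d) ^ 2 -
      x ^ (2 * p) * (x + d) ^ (2 * (1 - p)))
      (2 * ((p * x + (1 - p) * (x + d)) - (p * (x + d) + (1 - p) * x) *
        (x ^ (2 * p - 1) * (x + d) ^ (1 - 2 * p)))) x := by
  have hy : 0 < x + d := by positivity
  have hi : HasDerivAt (fun x : ℝ => x) 1 x := hasDerivAt_id x
  have hj : HasDerivAt (fun x : ℝ => x + d) 1 x := hi.add_const d
  have := (((hi.pow 2).const_mul p).add ((hj.pow 2).const_mul (1 - p))).sub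
    ((hi.rpow_const (p := 2 * p) (Or.inl hx.ne')).mul
      (hj.rpow_const (p := 2 * (1 - p)) (Or.inl hy.ne')))
  refine this.congr_deriv ?_
  have e1 : x ^ (2 * p) = x ^ (2 * p - 1) * x := by
    rw [← rpow_add_one hx.ne']; congr 1; ring
  have e2 : (x + d) ^ (2 * (1 - p)) = (x + d) ^ (1 - 2 * p) * (x + d) := by
    rw [← rpow_add_one hy.ne']; congr 1; ring
  have e3 : (2 * (1 - p) - 1) = 1 - 2 * p := by ring
  rw [e1, e2, e3]
  push_cast
  ring

lemma aux_cont (p d : ℝ) (hp : 0 < p) (hp1 : p < 1) :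
    Continuous (fun x : ℝ => p * x ^ 2 + (1 - p) * (x + d) ^ 2 -
      x ^ (2 * p) * (x + d) ^ (2 * (1 - p))) := by
  have h1 : Continuous (fun x : ℝ => x ^ (2 * p)) :=
    continuous_id.rpow_const (fun _ => Or.inr (by linarith))
  have h2 : Continuous (fun x : ℝ => (x + d) ^ (2 * (1 - p))) :=
    (continuous_id.add continuous_const).rpow_const (fun _ => Or.inr (by linarith))
  fun_prop

lemma aux_mono (p d : ℝ) (hp : 0 < p) (hp1 : p < 1) (hd : 0 < d) (h : 1 - p ≤ p) :
    MonotoneOn (fun x : ℝ => p * x ^ 2 + (1 - p) * (x + d) ^ 2 -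
      x ^ (2 * p) * (x + d) ^ (2 * (1 - p))) (Set.Ici 0) := by
  refine monotoneOn_of_deriv_nonneg (convex_Ici 0) (aux_cont p d hp hp1).continuousOn ?_ ?_
  · rw [interior_Ici]
    exact fun x hx => (aux_deriv p d x hd hx).differentiableAt.differentiableWithinAt
  · rw [interior_Ici]
    intro x hx
    have hx : 0 < x := hx
    rw [(aux_deriv p d x hd hx).deriv]
    have := aux_rpow (1 - p) p x (x + d) (by linarith) h (by ring) hx (by linarith)
    have hA : 0 < x ^ (2 * p - 1) * (x + d) ^ (1 - 2 * p) := by positivity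
    have hAB : (x ^ (2 * p - 1) * (x + d) ^ (1 - 2 * p)) *
        (x ^ (1 - p - p) * (x + d) ^ (p - (1 - p))) = 1 := by
      rw [mul_mul_mul_comm, ← rpow_add hx, ← rpow_add (by positivity)]
      ring_nf
      simp
    have h3 := mul_le_mul_of_nonneg_right this hA.le
    have h4 : ((1 - p) * (x + d) + p * x) * (x ^ (1 - p - p) * (x + d) ^ (p - (1 - p))) *
        (x ^ (2 * p - 1) * (x + d) ^ (1 - 2 * p)) = (1 - p) * (x + d) + p * x := by
      rw [mul_assoc, mul_comm (x ^ (1 - p - p) * _), hAB, mul_one]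
    rw [h4] at h3
    nlinarith

lemma aux_anti (p d : ℝ) (hp : 0 < p) (hp1 : p < 1) (hd : 0 < d) (h : p ≤ 1 - p) :
    AntitoneOn (fun x : ℝ => p * x ^ 2 + (1 - p) * (x + d) ^ 2 -
      x ^ (2 * p) * (x + d) ^ (2 * (1 - p))) (Set.Ici 0) := by
  refine antitoneOn_of_deriv_nonpos (convex_Ici 0) (aux_cont p d hp hp1).continuousOn ?_ ?_
  · rw [interior_Ici]
    exact fun x hx => (aux_deriv p d x hd hx).differentiableAt.differentiableWithinAt
  · rw [interior_Ici]
    intro x hx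
    have hx : 0 < x := hx
    rw [(aux_deriv p d x hd hx).deriv]
    have := aux_rpow p (1 - p) x (x + d) hp h (by ring) hx (by linarith)
    rw [show p - (1 - p) = 2 * p - 1 by ring, show 1 - p - p = 1 - 2 * p by ring] at this
    linarith

lemma aux_lim0 (p : ℝ) :
    Tendsto (fun h : ℝ => (p + (1 - p) * (1 + h) ^ 2 - (1 + h) ^ (2 * (1 - p))) / h ^ 2)
      (nhdsWithin 0 (Set.Ioi 0)) (nhds (2 * p * (1 - p))) := by
  have hd : ∀ r : ℝ, ∀ h : ℝ, 0 ≤ h →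
      HasDerivAt (fun h : ℝ => (1 + h) ^ r) (r * (1 + h) ^ (r - 1)) h := by
    intro r h hh
    have hj : HasDerivAt (fun x : ℝ => 1 + x) 1 h := (hasDerivAt_id h).const_add 1
    refine (hj.rpow_const (p := r) (Or.inl (by positivity))).congr_deriv ?_
    ring
  have hN : ∀ h : ℝ, 0 ≤ h →
      HasDerivAt (fun h : ℝ => p + (1 - p) * (1 + h) ^ 2 - (1 + h) ^ (2 * (1 - p)))
      (2 * (1 - p) * ((1 + h) - (1 + h) ^ (2 * (1 - p) - 1))) h := by
    intro h hh
    have hj : HasDerivAt (fun x : ℝ => 1 + x) 1 h := (hasDerivAt_id h).const_add 1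
    refine ((((hj.pow 2).const_mul (1 - p)).const_add p).sub (hd _ h hh)).congr_deriv ?_
    push_cast
    ring
  have hD : ∀ h : ℝ, HasDerivAt (fun h : ℝ => h ^ 2) (2 * h) h := by
    intro h
    simpa using hasDerivAt_pow 2 h
  refine HasDerivAt.lhopital_zero_nhdsGT
    (f' := fun h => 2 * (1 - p) * ((1 + h) - (1 + h) ^ (2 * (1 - p) - 1)))
    (g' := fun h => 2 * h) ?_ ?_ ?_ ?_ ?_ ?_
  · filter_upwards [self_mem_nhdsWithin] with h hh using hN h (le_of_lt hh)
  · exact Eventually.of_forall hD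
  · filter_upwards [self_mem_nhdsWithin] with h hh
    have : (0 : ℝ) < h := hh
    positivity
  · have := (hN 0 le_rfl).continuousAt.tendsto
    simp only [add_zero, one_pow, one_rpow] at this
    ring_nf at this ⊢
    exact this.mono_left nhdsWithin_le_nhds
  · have := (hD 0).continuousAt.tendsto
    simp only [ne_eq, OfNat.ofNat_ne_zero, not_false_eq_true, zero_pow] at this
    exact this.mono_left nhdsWithin_le_nhds
  · have hj : HasDerivAt (fun x : ℝ => 1 + x) 1 0 := (hasDerivAt_id (0 : ℝ)).const_add 1
    have h1 := (hj.sub (hd (2 * (1 - p) - 1) 0 le_rfl)).tendsto_slope_zero_right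
    have h2 := h1.const_mul (1 - p)
    have e : (1 - p) * (1 - (2 * (1 - p) - 1) * (1 + 0) ^ (2 * (1 - p) - 1 - 1))
        = 2 * p * (1 - p) := by
      simp; ring
    rw [e] at h2
    refine h2.congr' ?_
    filter_upwards [self_mem_nhdsWithin] with h hh
    have : (0 : ℝ) < h := hh
    simp
    field_simp

lemma aux_lim (p d : ℝ) (hd : 0 < d) :
    Tendsto (fun x : ℝ => p * x ^ 2 + (1 - p) * (x + d) ^ 2 -
      x ^ (2 * p) * (x + d) ^ (2 * (1 - p))) atTop (nhds (2 * p * (1 - p) * d ^ 2)) := by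
  have h0 : Tendsto (fun x : ℝ => d / x) atTop (nhdsWithin 0 (Set.Ioi 0)) := by
    refine tendsto_nhdsWithin_iff.2 ⟨tendsto_const_nhds.div_atTop tendsto_id, ?_⟩
    filter_upwards [eventually_gt_atTop 0] with x hx
    exact div_pos hd hx
  refine (((aux_lim0 p).comp h0).mul_const (d ^ 2)).congr' ?_
  filter_upwards [eventually_gt_atTop 0] with x hx
  have e1 : 1 + d / x = (x + d) / x := by field_simp
  have e2 : x ^ (2 * p) * x ^ (2 * (1 - p)) = x ^ 2 := by
    rw [← rpow_add hx, ← rpow_natCast]; congr 1; push_cast; ring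
  simp only [Function.comp]
  rw [e1, div_rpow (by positivity) hx.le]
  have hz : x ^ (2 * (1 - p)) ≠ 0 := by positivity
  generalize x ^ (2 * (1 - p)) = z at *
  generalize (x + d) ^ (2 * (1 - p)) = w at *
  generalize x ^ (2 * p) = t at *
  have e3 : w / z = t * w / x ^ 2 := by
    rw [← e2]
    have : t ≠ 0 := by rintro rfl; have := pow_pos hx 2; linarith
    field_simp
  rw [e3]
  field_simp

lemma aux_ext (f : ℝ → ℝ) (a L : ℝ) (hf : MonotoneOn f (Set.Ici a))
    (hL : Tendsto f atTop (nhds L)) :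
    IsLUB (f '' Set.Ici a) L ∧ IsGLB (f '' Set.Ici a) (f a) := by
  refine ⟨⟨?_, ?_⟩, IsLeast.isGLB ⟨⟨a, Set.self_mem_Ici, rfl⟩, ?_⟩⟩
  · rintro _ ⟨x, hx, rfl⟩
    refine ge_of_tendsto hL ?_
    filter_upwards [eventually_ge_atTop x] with y hy
    exact hf hx (le_trans (Set.mem_Ici.1 hx) hy) hy
  · intro b hb
    refine le_of_tendsto hL ?_
    filter_upwards [eventually_ge_atTop a] with y hy
    exact hb ⟨y, hy, rfl⟩
  · rintro _ ⟨x, hx, rfl⟩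
    exact hf Set.self_mem_Ici hx hx

lemma aux_ext' (f : ℝ → ℝ) (a L : ℝ) (hf : AntitoneOn f (Set.Ici a))
    (hL : Tendsto f atTop (nhds L)) :
    IsGLB (f '' Set.Ici a) L ∧ IsLUB (f '' Set.Ici a) (f a) := by
  refine ⟨⟨?_, ?_⟩, IsGreatest.isLUB ⟨⟨a, Set.self_mem_Ici, rfl⟩, ?_⟩⟩
  · rintro _ ⟨x, hx, rfl⟩
    refine le_of_tendsto hL ?_
    filter_upwards [eventually_ge_atTop x] with y hy
    exact hf hx (le_trans (Set.mem_Ici.1 hx) hy) hy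
  · intro b hb
    refine ge_of_tendsto hL ?_
    filter_upwards [eventually_ge_atTop a] with y hy
    exact hb ⟨y, hy, rfl⟩
  · rintro _ ⟨x, hx, rfl⟩
    exact hf Set.self_mem_Ici hx hx



/-- Monotonicity of `ψ(c) = p (u+c)² + q (v+c)² - (u+c)^{2p} (v+c)^{2q}` on `[-u, ∞)`:
nondecreasing if `p ≥ q`, nonincreasing if `p ≤ q`; consequently its supremum and
infimum over `[-u, ∞)` are `max (q(v-u)²) (2pq(v-u)²)` and `min (q(v-u)²) (2pq(v-u)²)`
respectively, with `ψ(-u) = q (v-u)²`. -/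
theorem psi_monotone_sup_inf (u v p : ℝ) (hu : 0 ≤ u) (huv : u < v)
    (hp : p ∈ Set.Ioo (0 : ℝ) 1) (q : ℝ) (hq : q = 1 - p)
    (ψ : ℝ → ℝ)
    (hψ : ∀ c : ℝ, ψ c = p * (u + c) ^ 2 + q * (v + c) ^ 2 -
      (u + c) ^ (2 * p) * (v + c) ^ (2 * q)) :
    (q ≤ p → MonotoneOn ψ (Set.Ici (-u))) ∧
    (p ≤ q → AntitoneOn ψ (Set.Ici (-u))) ∧
    sSup (ψ '' Set.Ici (-u)) = max (q * (v - u) ^ 2) (2 * p * q * (v - u) ^ 2) ∧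
    sInf (ψ '' Set.Ici (-u)) = min (q * (v - u) ^ 2) (2 * p * q * (v - u) ^ 2) ∧
    ψ (-u) = q * (v - u) ^ 2 := by

  obtain ⟨hp0, hp1⟩ := hp
  subst hq
  have hd : 0 < v - u := by linarith
  have hF : ψ = fun c => (fun x : ℝ => p * x ^ 2 + (1 - p) * (x + (v - u)) ^ 2 -
      x ^ (2 * p) * (x + (v - u)) ^ (2 * (1 - p))) (u + c) := by
    funext c
    rw [hψ]
    simp only [show u + c + (v - u) = v + c by ring]
  have hmono : 1 - p ≤ p → MonotoneOn ψ (Set.Ici (-u)) := by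
    intro h x hx y hy hxy
    rw [Set.mem_Ici] at hx hy
    rw [hF]
    exact aux_mono p (v - u) hp0 hp1 hd h (Set.mem_Ici.2 (by linarith))
      (Set.mem_Ici.2 (by linarith)) (by linarith)
  have hanti : p ≤ 1 - p → AntitoneOn ψ (Set.Ici (-u)) := by
    intro h x hx y hy hxy
    rw [Set.mem_Ici] at hx hy
    rw [hF]
    exact aux_anti p (v - u) hp0 hp1 hd h (Set.mem_Ici.2 (by linarith))
      (Set.mem_Ici.2 (by linarith)) (by linarith)
  have hlim : Tendsto ψ atTop (nhds (2 * p * (1 - p) * (v - u) ^ 2)) := by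
    rw [hF]
    exact (aux_lim p (v - u) hd).comp (tendsto_atTop_add_const_left _ u tendsto_id)
  have hval : ψ (-u) = (1 - p) * (v - u) ^ 2 := by
    rw [hψ, show u + -u = 0 by ring, zero_rpow (by positivity)]
    ring
  have hne : (ψ '' Set.Ici (-u)).Nonempty := ⟨_, -u, Set.self_mem_Ici, rfl⟩
  have hA : 0 ≤ (1 - p) * (v - u) ^ 2 := mul_nonneg (by linarith) (sq_nonneg _)
  refine ⟨hmono, hanti, ?_, ?_, hval⟩
  · rcases le_total (1 - p) p with h | h
    · rw [(aux_ext ψ _ _ (hmono h) hlim).1.csSup_eq hne, max_eq_right]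
      nlinarith
    · rw [(aux_ext' ψ _ _ (hanti h) hlim).2.csSup_eq hne, hval, max_eq_left]
      nlinarith
  · rcases le_total (1 - p) p with h | h
    · rw [(aux_ext ψ _ _ (hmono h) hlim).2.csInf_eq hne, hval, min_eq_left]
      nlinarith
    · rw [(aux_ext' ψ _ _ (hanti h) hlim).1.csInf_eq hne, min_eq_right]
      nlinarith
end

section
/- For any real numbers V and E with 0 < V < E: sup{ x̄ − (x₁⋯x_n)^{1/n} : n ∈ ℕ, y ∈ [0,∞)ⁿ, x_i = y_i² for all i, (1/n)·Σᵢ(y_i − ȳ)² ≤ V, (1/n)·Σᵢ(y_i − y_min)² ≤ E } = max(2V, E), where ȳ := (1/n)·Σᵢ y_i, x̄ := (1/n)·Σᵢ x_i, and y_min := minᵢ y_i. In particular, for any such n and y one has x̄ − (x₁⋯x_n)^{1/n} ≤ max(2V, E). -/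
open Real Finset


lemma aux_log_s19 (x b : ℝ) (hx : 0 ≤ x) (hb : 0 < b) :
    x * (2 * b - x) / b ^ 2 * Real.log (1 + b) + x * (x - b) / (b * (1 + b)) ≤
      Real.log (1 + x) := by
  let F : ℝ → ℝ := fun s => Real.log (1 + s * x) -
    (x * (2 * b - x) / b ^ 2 * Real.log (1 + s * b) + x * (x - b) / b * (s / (1 + s * b)))
  have hd : ∀ s : ℝ, 0 ≤ s → HasDerivAt F
      (x * s ^ 2 * (x - b) ^ 2 / ((1 + s * x) * (1 + s * b) ^ 2)) s := by
    intro s hs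
    have h1 : 0 < 1 + s * x := by positivity
    have h2 : 0 < 1 + s * b := by positivity
    have d1 : HasDerivAt (fun s : ℝ => 1 + s * x) x s := by
      simpa using ((hasDerivAt_id s).mul_const x).const_add 1
    have d2 : HasDerivAt (fun s : ℝ => 1 + s * b) b s := by
      simpa using ((hasDerivAt_id s).mul_const b).const_add 1
    have d3 := (d1.log h1.ne').sub (((d2.log h2.ne').const_mul (x * (2 * b - x) / b ^ 2)).add
      (((hasDerivAt_id s).div d2 h2.ne').const_mul (x * (x - b) / b)))
    refine HasDerivAt.congr_deriv d3 ?_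
    simp only [id]
    field_simp
    ring
  have hm : MonotoneOn F (Set.Ici 0) := by
    apply monotoneOn_of_deriv_nonneg (convex_Ici 0)
    · intro s hs
      exact (hd s hs).continuousAt.continuousWithinAt
    · intro s hs
      rw [interior_Ici] at hs
      exact (hd s (le_of_lt hs)).differentiableAt.differentiableWithinAt
    · intro s hs
      rw [interior_Ici] at hs
      have hs' : (0 : ℝ) < s := hs
      rw [(hd s hs'.le).deriv]
      positivity
  have h := hm (Set.mem_Ici.2 le_rfl) (Set.mem_Ici.2 zero_le_one) zero_le_one
  simp only [F, zero_mul, add_zero, Real.log_one, one_mul, zero_div, mul_zero, sub_zero] at h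
  have e : x * (x - b) / b * (1 / (1 + b)) = x * (x - b) / (b * (1 + b)) := by
    field_simp
  rw [e] at h
  linarith

lemma aux_pow (u r : ℝ) (hu : 0 ≤ u) (hr : 0 ≤ r) (hr1 : r ≤ 1) :
    1 + r * u + r * (r - 1) / 2 * u ^ 2 ≤ (1 + u) ^ r := by
  let F : ℝ → ℝ := fun s => (1 + s) ^ r - (1 + r * s + r * (r - 1) / 2 * s ^ 2)
  have hd : ∀ s : ℝ, 0 ≤ s → HasDerivAt F
      (r * ((1 + s) ^ (r - 1) - (1 - (1 - r) * s))) s := by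
    intro s hs
    have h1 : 0 < 1 + s := by positivity
    have d1 : HasDerivAt (fun s : ℝ => 1 + s) 1 s := by
      simpa using (hasDerivAt_id s).const_add 1
    have d3 := (d1.rpow_const (p := r) (Or.inl h1.ne')).sub
      ((((hasDerivAt_id s).const_mul r).const_add 1).add
        (((hasDerivAt_id s).pow 2).const_mul (r * (r - 1) / 2)))
    refine HasDerivAt.congr_deriv d3 ?_
    simp only [id]
    ring
  have hm : MonotoneOn F (Set.Ici 0) := by
    apply monotoneOn_of_deriv_nonneg (convex_Ici 0)
    · intro s hs
      exact (hd s hs).continuousAt.continuousWithinAt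
    · intro s hs
      rw [interior_Ici] at hs
      exact (hd s (le_of_lt hs)).differentiableAt.differentiableWithinAt
    · intro s hs
      rw [interior_Ici] at hs
      have hs' : (0 : ℝ) < s := hs
      rw [(hd s hs'.le).deriv]
      apply mul_nonneg hr
      have h1 : 0 < 1 + s := by positivity
      have hB : (1 + s) ^ (1 - r) ≤ 1 + (1 - r) * s :=
        rpow_one_add_le_one_add_mul_self (by linarith) (by linarith) (by linarith)
      have hpos : 0 < (1 + s) ^ (r - 1) := Real.rpow_pos_of_pos h1 _
      have hprod : (1 + s) ^ (r - 1) * (1 + s) ^ (1 - r) = 1 := by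
        rw [← Real.rpow_add h1]; simp
      have ht : 0 ≤ (1 - r) * s := mul_nonneg (by linarith) hs'.le
      have h3 : 1 ≤ (1 + s) ^ (r - 1) * (1 + (1 - r) * s) := by
        exact hprod.symm.le.trans (mul_le_mul_of_nonneg_left hB hpos.le)
      by_contra hc
      push Not at hc
      have : (1 + s) ^ (r - 1) * (1 + (1 - r) * s) <
          (1 - (1 - r) * s) * (1 + (1 - r) * s) :=
        mul_lt_mul_of_pos_right (by linarith) (by linarith)
      nlinarith [sq_nonneg ((1 - r) * s)]
  have h := hm (Set.mem_Ici.2 le_rfl) (Set.mem_Ici.2 hu) hu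
  simp [F] at h
  linarith

lemma aux_var (n : ℕ) (y : Fin (n + 1) → ℝ) (m : ℝ) :
    (1 / (n + 1) : ℝ) * ∑ i, (y i - m) ^ 2 =
      (1 / (n + 1) : ℝ) * ∑ i, (y i) ^ 2 - 2 * m * ((1 / (n + 1) : ℝ) * ∑ i, y i) + m ^ 2 := by
  have h : ∑ i, (y i - m) ^ 2 = ∑ i, (y i) ^ 2 - 2 * m * ∑ i, y i + (n + 1) * m ^ 2 := by
    have : ∀ i, (y i - m) ^ 2 = (y i) ^ 2 - 2 * m * y i + m ^ 2 := fun i => by ring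
    simp only [this, Finset.sum_add_distrib, Finset.sum_sub_distrib, ← Finset.mul_sum]
    simp
  rw [h]
  have : (n + 1 : ℝ) ≠ 0 := by positivity
  field_simp

lemma aux_upper (V E : ℝ) (hV : 0 < V)
    (n : ℕ) (y : Fin (n + 1) → ℝ) (hy : ∀ i, 0 ≤ y i)
    (h1 : (1 / (n + 1) : ℝ) * ∑ i, (y i - (1 / (n + 1) : ℝ) * ∑ j, y j) ^ 2 ≤ V)
    (h2 : (1 / (n + 1) : ℝ) * ∑ i, (y i - univ.inf' univ_nonempty y) ^ 2 ≤ E) :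
    (1 / (n + 1) : ℝ) * ∑ i, (y i) ^ 2 -
        (∏ i, (y i) ^ 2) ^ (1 / (n + 1) : ℝ) ≤ max (2 * V) E := by
  have hmin : ∀ i, univ.inf' univ_nonempty y ≤ y i := fun i => Finset.inf'_le _ (mem_univ i)
  have hm0 : 0 ≤ univ.inf' univ_nonempty y := by
    rw [Finset.le_inf'_iff]; intro i _; exact hy i
  generalize univ.inf' univ_nonempty y = m at *
  rw [aux_var] at h1
  have h2' := h2
  rw [aux_var] at h2
  have hG0 : 0 ≤ (∏ i, (y i) ^ 2) ^ (1 / (n + 1) : ℝ) :=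
    Real.rpow_nonneg (Finset.prod_nonneg fun i _ => sq_nonneg _) _
  have hn : (0 : ℝ) < n + 1 := by positivity
  rcases hm0.eq_or_lt with hm | hm
  · subst hm
    apply le_max_of_le_right
    linarith
  have hypos : ∀ i, 0 < y i := fun i => hm.trans_le (hmin i)
  set w : ℝ := 1 / (n + 1) with hw
  have hwpos : 0 < w := by positivity
  have hw1 : w * (n + 1) = 1 := by rw [hw]; field_simp
  have hGeq : (∏ i, (y i) ^ 2) ^ w = m ^ 2 * Real.exp (2 * (w * ∑ i, Real.log (1 + (y i - m) / m))) := by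
    have hp : 0 < ∏ i, (y i) ^ 2 := Finset.prod_pos fun i _ => by have := hypos i; positivity
    rw [Real.rpow_def_of_pos hp, Real.log_prod (fun i _ => by have := hypos i; positivity)]
    have : ∀ i, Real.log ((y i) ^ 2) = 2 * Real.log m + 2 * Real.log (1 + (y i - m) / m) := by
      intro i
      have e : 1 + (y i - m) / m = y i / m := by field_simp; ring
      rw [e, Real.log_div (hypos i).ne' hm.ne', Real.log_pow]
      push_cast; ring
    simp only [this, Finset.sum_add_distrib, ← Finset.mul_sum]
    have e2 : (∑ _i : Fin (n + 1), Real.log m) = (n + 1) * Real.log m := by simp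
    rw [e2]
    have e3 : (2 * ((n + 1) * Real.log m) + 2 * ∑ i, Real.log (1 + (y i - m) / m)) * w
        = 2 * Real.log m + 2 * (w * ∑ i, Real.log (1 + (y i - m) / m)) := by
      linear_combination 2 * Real.log m * hw1
    rw [e3, Real.exp_add]
    congr 1
    rw [show 2 * Real.log m = Real.log m + Real.log m by ring, Real.exp_add, Real.exp_log hm]
    ring
  -- moments of `y - m`
  set S1 : ℝ := w * ∑ i, (y i - m) with hS1
  set S2 : ℝ := w * ∑ i, (y i - m) ^ 2 with hS2
  have eS1 : w * ∑ i, y i = S1 + m := by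
    rw [hS1, Finset.sum_sub_distrib]
    simp only [Finset.sum_const, Finset.card_univ, Fintype.card_fin, nsmul_eq_mul, Nat.cast_add,
      Nat.cast_one]
    linear_combination m * hw1
  have eS2 : w * ∑ i, (y i) ^ 2 = S2 + 2 * m * S1 + m ^ 2 := by
    have := aux_var n y m
    rw [← hw, ← hS2, eS1] at this
    linarith
  rw [eS1, eS2] at h1
  have hvar : S2 - S1 ^ 2 ≤ V := by nlinarith
  have hS1nn : 0 ≤ S1 := mul_nonneg hwpos.le (Finset.sum_nonneg fun i _ => by linarith [hmin i])
  have hS2nn : 0 ≤ S2 := mul_nonneg hwpos.le (Finset.sum_nonneg fun i _ => sq_nonneg _)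
  rw [hGeq, eS2]
  rcases hS2nn.eq_or_lt with hz | hS2pos
  · -- constant tuple
    have hs : ∑ i, (y i - m) ^ 2 = 0 := by
      rcases mul_eq_zero.1 hz.symm with h | h
      · exact absurd h hwpos.ne'
      · exact h
    have hall : ∀ i, y i - m = 0 := by
      intro i
      have := (Finset.sum_eq_zero_iff_of_nonneg (fun i _ => sq_nonneg (y i - m))).1 hs i (mem_univ i)
      exact pow_eq_zero_iff (two_ne_zero) |>.1 this
    have hS10 : S1 = 0 := by rw [hS1]; simp [hall]
    apply le_max_of_le_left
    rw [← hz, hS10]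
    simp [hall]
    linarith
  have hS1pos : 0 < S1 := by
    rcases hS1nn.eq_or_lt with hz | h
    · exfalso
      have hs : ∑ i, (y i - m) = 0 := by
        rcases mul_eq_zero.1 hz.symm with h | h
        · exact absurd h hwpos.ne'
        · exact h
      have hall : ∀ i, y i - m = 0 := fun i =>
        (Finset.sum_eq_zero_iff_of_nonneg (fun i _ => by linarith [hmin i])).1 hs i (mem_univ i)
      rw [hS2] at hS2pos
      simp [hall] at hS2pos
    · exact h
  set b : ℝ := S2 / S1 with hb
  have hbpos : 0 < b := by positivity
  have hbS : b * S1 = S2 := by rw [hb]; field_simp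
  set L := Real.log (1 + b / m) with hL
  have hlog : S1 / b * L ≤ w * ∑ i, Real.log (1 + (y i - m) / m) := by
    have hsum : ∑ i, ((2 * L / b - 1 / (m + b)) * (y i - m)
        + (1 / (b * (m + b)) - L / b ^ 2) * (y i - m) ^ 2) ≤ ∑ i, Real.log (1 + (y i - m) / m) := by
      apply Finset.sum_le_sum
      intro i _
      have := aux_log_s19 ((y i - m) / m) (b / m) (div_nonneg (by linarith [hmin i]) hm.le) (by positivity)
      refine le_trans (le_of_eq ?_) this
      rw [← hL]
      field_simp
      ring
    rw [Finset.sum_add_distrib, ← Finset.mul_sum, ← Finset.mul_sum] at hsum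
    have := mul_le_mul_of_nonneg_left hsum hwpos.le
    refine le_trans (le_of_eq ?_) this
    have e : w * ((2 * L / b - 1 / (m + b)) * ∑ i, (y i - m)
        + (1 / (b * (m + b)) - L / b ^ 2) * ∑ i, (y i - m) ^ 2)
        = (2 * L / b - 1 / (m + b)) * S1 + (1 / (b * (m + b)) - L / b ^ 2) * S2 := by
      rw [hS1, hS2]; ring
    rw [e, ← hbS]
    field_simp
    ring
  have hub : 0 < b / m := by positivity
  have hGge : m ^ 2 * (1 + b / m) ^ (2 * (S1 / b)) ≤
      m ^ 2 * Real.exp (2 * (w * ∑ i, Real.log (1 + (y i - m) / m))) := by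
    apply mul_le_mul_of_nonneg_left _ (by positivity)
    rw [Real.rpow_def_of_pos (by positivity), ← hL]
    apply Real.exp_le_exp.2
    linarith
  refine le_trans (sub_le_sub_left hGge _) ?_
  rcases le_total 1 (2 * (S1 / b)) with hr | hr
  · apply le_max_of_le_right
    have hB := one_add_mul_self_le_rpow_one_add (s := b / m) (by linarith) hr
    have := mul_le_mul_of_nonneg_left hB (sq_nonneg m)
    have e : m ^ 2 * (1 + 2 * (S1 / b) * (b / m)) = m ^ 2 + 2 * m * S1 := by
      field_simp
    linarith
  · apply le_max_of_le_left
    have hB := aux_pow (b / m) (2 * (S1 / b)) hub.le (by positivity) hr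
    have := mul_le_mul_of_nonneg_left hB (sq_nonneg m)
    have e : m ^ 2 * (1 + 2 * (S1 / b) * (b / m)
        + 2 * (S1 / b) * (2 * (S1 / b) - 1) / 2 * (b / m) ^ 2)
        = m ^ 2 + 2 * m * S1 + 2 * S1 ^ 2 - S2 := by
      rw [← hbS]
      field_simp
      ring
    linarith

lemma aux_lowerE (V E : ℝ) (hV : 0 < V) (hVE : V < E) :
    ∃ (n : ℕ) (y : Fin (n + 1) → ℝ),
        (∀ i, 0 ≤ y i) ∧
        (1 / (n + 1) : ℝ) * ∑ i, (y i - (1 / (n + 1) : ℝ) * ∑ j, y j) ^ 2 ≤ V ∧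
        (1 / (n + 1) : ℝ) * ∑ i, (y i - univ.inf' univ_nonempty y) ^ 2 ≤ E ∧
        E = (1 / (n + 1) : ℝ) * ∑ i, (y i) ^ 2 -
          (∏ i, (y i) ^ 2) ^ (1 / (n + 1) : ℝ) := by
  obtain ⟨n, hn⟩ := exists_nat_gt (E / V)
  have hE : 0 < E := hV.trans hVE
  have hnpos : (0 : ℝ) < n := lt_trans (by positivity) hn
  rw [div_lt_iff₀ hV] at hn
  set c : ℝ := √(E * (n + 1) / n) with hc
  have hc2 : c ^ 2 = E * (n + 1) / n := Real.sq_sqrt (by positivity)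
  have hc0 : 0 ≤ c := Real.sqrt_nonneg _
  have hy0 : ∀ i, 0 ≤ (Fin.cons 0 (fun _ => c) : Fin (n + 1) → ℝ) i := by
    intro i
    refine Fin.cases ?_ (fun j => ?_) i
    · simp
    · simpa using hc0
  have hinf : univ.inf' univ_nonempty (Fin.cons 0 (fun _ => c) : Fin (n + 1) → ℝ) = 0 := by
    apply le_antisymm
    · have := Finset.inf'_le (Fin.cons 0 (fun _ => c) : Fin (n + 1) → ℝ) (mem_univ 0)
      exact this.trans (le_of_eq (by simp only [Fin.cons_zero]))
    · rw [Finset.le_inf'_iff]; intro i _; exact hy0 i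
  refine ⟨n, Fin.cons 0 (fun _ => c), hy0, ?_, ?_, ?_⟩
  · rw [aux_var]
    simp only [Fin.sum_univ_succ, Fin.cons_zero, Fin.cons_succ]
    simp only [Finset.sum_const, Finset.card_univ, Fintype.card_fin, nsmul_eq_mul]
    have : (1 / (n + 1) : ℝ) * (0 ^ 2 + n * c ^ 2) - 2 * (1 / (n + 1) * (0 + n * c)) * (1 / (n + 1) * (0 + n * c))
        + (1 / (n + 1) * (0 + n * c)) ^ 2 = n / (n + 1) ^ 2 * c ^ 2 := by
      field_simp; ring
    rw [this, hc2]
    have : (n / (n + 1) ^ 2 * (E * (n + 1) / n) : ℝ) = E / (n + 1) := by field_simp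
    rw [this, div_le_iff₀ (by positivity)]
    nlinarith
  · rw [hinf]
    simp only [Fin.sum_univ_succ, Fin.cons_zero, Fin.cons_succ]
    simp only [Finset.sum_const, Finset.card_univ, Fintype.card_fin, nsmul_eq_mul, sub_zero, hc2]
    apply le_of_eq
    field_simp; ring
  · simp only [Fin.sum_univ_succ, Fin.prod_univ_succ, Fin.cons_zero, Fin.cons_succ]
    simp only [Finset.sum_const, Finset.card_univ, Fintype.card_fin, nsmul_eq_mul, hc2]
    rw [zero_pow two_ne_zero, zero_mul, Real.zero_rpow (by positivity)]
    field_simp; ring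

lemma aux_exp (t : ℝ) (ht : |t| ≤ 1 / 2) :
    (1 + t) ^ 2 * Real.exp (-2 * t) ≤ 1 - t ^ 2 + 10 * |t| ^ 3 := by
  have h := Real.exp_bound (x := -2 * t) (by rw [abs_mul]; norm_num; linarith) (n := 3) (by norm_num)
  have h' := (abs_le.1 h).2
  simp only [Finset.sum_range_succ, Finset.sum_range_zero, abs_mul, mul_pow] at h'
  norm_num [Nat.factorial] at h'
  have ha := abs_nonneg t
  have hu : Real.exp (-2 * t) ≤ 1 - 2 * t + 2 * t ^ 2 + 16 / 9 * |t| ^ 3 := by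
    rw [show -2 * t = -(2 * t) by ring]
    linarith
  refine le_trans (mul_le_mul_of_nonneg_left hu (sq_nonneg _)) ?_
  have hle : t ≤ |t| := le_abs_self t
  have h9 : (1 + t) ^ 2 ≤ 9 / 4 := by
    have := abs_le.1 ht
    nlinarith
  have h3 : t ^ 3 ≤ |t| ^ 3 := by rw [← abs_pow]; exact le_abs_self _
  have h4 : t ^ 4 ≤ 1 / 2 * |t| ^ 3 := by
    have : t ^ 4 = |t| * |t| ^ 3 := by
      rw [show t ^ 4 = (t ^ 2) ^ 2 by ring, ← sq_abs t]; ring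
    rw [this]
    exact mul_le_mul_of_nonneg_right ht (by positivity)
  have h5 : (1 + t) ^ 2 * |t| ^ 3 ≤ 9 / 4 * |t| ^ 3 :=
    mul_le_mul_of_nonneg_right h9 (by positivity)
  have e : (1 + t) ^ 2 * (1 - 2 * t + 2 * t ^ 2 + 16 / 9 * |t| ^ 3) =
    1 - t ^ 2 + 2 * t ^ 3 + 2 * t ^ 4 + 16 / 9 * ((1 + t) ^ 2 * |t| ^ 3) := by ring
  rw [e]
  have : 0 ≤ |t| ^ 3 := by positivity
  linarith

lemma aux_lowerV (V E : ℝ) (hV : 0 < V) (hVE : V < E) (β : ℝ) (hβ : β < 2 * V) :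
    ∃ (n : ℕ) (y : Fin (n + 1) → ℝ),
        (∀ i, 0 ≤ y i) ∧
        (1 / (n + 1) : ℝ) * ∑ i, (y i - (1 / (n + 1) : ℝ) * ∑ j, y j) ^ 2 ≤ V ∧
        (1 / (n + 1) : ℝ) * ∑ i, (y i - univ.inf' univ_nonempty y) ^ 2 ≤ E ∧
        β < (1 / (n + 1) : ℝ) * ∑ i, (y i) ^ 2 -
          (∏ i, (y i) ^ 2) ^ (1 / (n + 1) : ℝ) := by
  have hEV : 0 < E - V := by linarith
  obtain ⟨n, hn⟩ := exists_nat_gt (V / (E - V))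
  have hnpos : (0 : ℝ) < n := lt_trans (by positivity) hn
  have hnN : 0 < n := by exact_mod_cast hnpos
  have hn1 : (1 : ℝ) ≤ n := by exact_mod_cast hnN
  rw [div_lt_iff₀ hEV] at hn
  set a : ℝ := √(V / n) with ha
  have ha2 : a ^ 2 = V / n := Real.sq_sqrt (by positivity)
  have ha0 : 0 ≤ a := Real.sqrt_nonneg _
  set z : Fin (n + 1) → ℝ := Fin.cons (n * a) (fun _ => -a) with hz
  have hn' : (0 : ℝ) < n + 1 := by positivity
  have hzsum : ∑ i, z i = 0 := by
    simp [hz, Fin.sum_univ_succ]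
  have hzsq : (1 / (n + 1) : ℝ) * ∑ i, z i ^ 2 = V := by
    simp only [hz, Fin.sum_univ_succ, Fin.cons_zero, Fin.cons_succ, Finset.sum_const,
      Finset.card_univ, Fintype.card_fin, nsmul_eq_mul]
    rw [neg_sq, mul_pow, ha2]
    field_simp
  have hzge : ∀ i, -a ≤ z i := by
    intro i
    refine Fin.cases ?_ (fun j => ?_) i
    · simp only [hz, Fin.cons_zero]; nlinarith
    · simp [hz]
  have hzabs : ∀ i, |z i| ≤ n * a := by
    intro i
    refine Fin.cases ?_ (fun j => ?_) i
    · simp only [hz, Fin.cons_zero]; rw [abs_of_nonneg (by positivity)]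
    · simp only [hz, Fin.cons_succ]; rw [abs_neg, abs_of_nonneg ha0]; nlinarith
  set C : ℝ := (1 / (n + 1) : ℝ) * ∑ i, |z i| ^ 3 with hC
  have hC0 : 0 ≤ C := by positivity
  set K : ℝ := max (2 * (n * a) + 1) (10 * C / (2 * V - β) + 1) with hK
  have hK1 : 2 * (n * a) + 1 ≤ K := le_max_left _ _
  have hK2 : 10 * C / (2 * V - β) < K := lt_of_lt_of_le (by linarith) (le_max_right _ _)
  have hna : 0 ≤ n * a := by positivity
  have hKpos : 0 < K := by linarith
  rw [div_lt_iff₀ (by linarith)] at hK2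
  have hy0 : ∀ i, 0 ≤ K + z i := by
    intro i
    have := (abs_le.1 (hzabs i)).1
    linarith
  have hinf : univ.inf' univ_nonempty (fun i => K + z i) = K - a := by
    apply le_antisymm
    · have := Finset.inf'_le (fun i => K + z i) (mem_univ (Fin.succ ⟨0, hnN⟩))
      refine le_trans this (le_of_eq ?_)
      simp only [hz, Fin.cons_succ]; ring
    · rw [Finset.le_inf'_iff]; intro i _
      have := hzge i
      linarith
  have hmean : (1 / (n + 1) : ℝ) * ∑ i, (K + z i) = K := by
    rw [Finset.sum_add_distrib, hzsum]; simp; field_simp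
  have hsq : (1 / (n + 1) : ℝ) * ∑ i, (K + z i) ^ 2 = K ^ 2 + V := by
    have h := aux_var n z (-K)
    rw [hzsq, hzsum] at h
    have e : ∀ i, (K + z i) ^ 2 = (z i - -K) ^ 2 := fun i => by ring
    simp only [e]
    rw [h]; ring
  refine ⟨n, fun i => K + z i, hy0, ?_, ?_, ?_⟩
  · rw [aux_var]
    simp only [hmean, hsq]
    nlinarith
  · rw [hinf, aux_var]
    simp only [hmean, hsq]
    have : a ^ 2 ≤ E - V := by
      rw [ha2, div_le_iff₀ hnpos]; linarith
    nlinarith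
  · simp only [hsq]
    have hG : (∏ i, (K + z i) ^ 2) ^ (1 / (n + 1) : ℝ) ≤ K ^ 2 - V + 10 * C / K := by
      have e1 : ∏ i, (K + z i) ^ 2 = ∏ i, ((K + z i) ^ 2 * Real.exp (-2 * (z i / K))) := by
        rw [Finset.prod_mul_distrib, ← Real.exp_sum, ← Finset.mul_sum, ← Finset.sum_div, hzsum]
        simp
      rw [e1, ← Real.finsetProd_rpow _ _ (fun i _ => by positivity)]
      refine le_trans (Real.geom_mean_le_arith_mean_weighted univ (fun _ => (1 / (n + 1) : ℝ)) _
        (fun i _ => by positivity) (by simp; field_simp) (fun i _ => by positivity)) ?_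
      have hb : ∀ i, (K + z i) ^ 2 * Real.exp (-2 * (z i / K)) ≤
          K ^ 2 - z i ^ 2 + 10 / K * |z i| ^ 3 := by
        intro i
        have h := aux_exp (z i / K) (by
          rw [abs_div, abs_of_pos hKpos, div_le_iff₀ hKpos]
          have := hzabs i
          linarith)
        have h' := mul_le_mul_of_nonneg_left h (sq_nonneg K)
        rw [abs_div, abs_of_pos hKpos] at h'
        have e2 : K ^ 2 * ((1 + z i / K) ^ 2 * Real.exp (-2 * (z i / K))) =
          (K + z i) ^ 2 * Real.exp (-2 * (z i / K)) := by
          rw [← mul_assoc, ← mul_pow]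
          congr 2
          field_simp
        have e3 : K ^ 2 * (1 - (z i / K) ^ 2 + 10 * (|z i| / K) ^ 3) =
          K ^ 2 - z i ^ 2 + 10 / K * |z i| ^ 3 := by
          field_simp
        rw [e2, e3] at h'
        exact h'
      rw [← Finset.mul_sum]
      refine le_trans (mul_le_mul_of_nonneg_left (Finset.sum_le_sum fun i _ => hb i)
        (by positivity)) (le_of_eq ?_)
      rw [Finset.sum_add_distrib, Finset.sum_sub_distrib, ← Finset.mul_sum, mul_add, mul_sub, hzsq]
      have e4 : (1 / (n + 1) : ℝ) * (10 / K * ∑ i, |z i| ^ 3) = 10 * C / K := by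
        rw [hC]; ring
      rw [e4]
      simp
      field_simp
    have : 10 * C / K < 2 * V - β := by
      rw [div_lt_iff₀ hKpos]; linarith
    linarith

/-- Corollary (arithmetic vs geometric means of finitely many numbers): for
`0 < V < E`, the supremum of `x̄ - (x₁⋯x_n)^{1/n}` over all `n ≥ 1` and all tuples
`y ∈ [0,∞)ⁿ` with `x_i = y_i²`, `(1/n)Σ(y_i - ȳ)² ≤ V` and `(1/n)Σ(y_i - y_min)² ≤ E`
equals `max (2V) E`; in particular every such tuple satisfies
`x̄ - (x₁⋯x_n)^{1/n} ≤ max (2V) E`. (Tuples are indexed by `Fin (n+1)` so that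
`n + 1 ≥ 1` plays the role of the number `n ∈ ℕ` of entries.) -/
theorem sup_arith_sub_geom_finite (V E : ℝ) (hV : 0 < V) (hVE : V < E) :
    sSup {d : ℝ | ∃ (n : ℕ) (y : Fin (n + 1) → ℝ),
        (∀ i, 0 ≤ y i) ∧
        (1 / (n + 1) : ℝ) * ∑ i, (y i - (1 / (n + 1) : ℝ) * ∑ j, y j) ^ 2 ≤ V ∧
        (1 / (n + 1) : ℝ) * ∑ i, (y i - univ.inf' univ_nonempty y) ^ 2 ≤ E ∧
        d = (1 / (n + 1) : ℝ) * ∑ i, (y i) ^ 2 -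
          (∏ i, (y i) ^ 2) ^ (1 / (n + 1) : ℝ)} = max (2 * V) E ∧
    ∀ (n : ℕ) (y : Fin (n + 1) → ℝ), (∀ i, 0 ≤ y i) →
      (1 / (n + 1) : ℝ) * ∑ i, (y i - (1 / (n + 1) : ℝ) * ∑ j, y j) ^ 2 ≤ V →
      (1 / (n + 1) : ℝ) * ∑ i, (y i - univ.inf' univ_nonempty y) ^ 2 ≤ E →
      (1 / (n + 1) : ℝ) * ∑ i, (y i) ^ 2 -
        (∏ i, (y i) ^ 2) ^ (1 / (n + 1) : ℝ) ≤ max (2 * V) E := by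
  refine ⟨?_, fun n y hy h1 h2 => aux_upper V E hV n y hy h1 h2⟩
  apply IsLUB.csSup_eq
  · constructor
    · rintro d ⟨n, y, hy, h1, h2, rfl⟩
      exact aux_upper V E hV n y hy h1 h2
    · intro u hu
      apply max_le
      · apply le_of_forall_lt
        intro β hβ
        obtain ⟨n, y, hy, h1, h2, h3⟩ := aux_lowerV V E hV hVE β hβ
        exact lt_of_lt_of_le h3 (hu ⟨n, y, hy, h1, h2, rfl⟩)
      · exact hu (aux_lowerE V E hV hVE)
  · exact ⟨E, aux_lowerE V E hV hVE⟩
end
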